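/- arXiv:1208.1412 — 5 statements merged into one kernel-verified Lean document; each statement's English description precedes it below -/
import Mathlib

section
/- Let p be a prime with p ≡ 1 (mod 20). Then p is representable by x²+20y² if and only if p is representable by x²+100y². Let p be a prime with p ≡ 9 (mod 20). Then p is representable by exactly one of the quadratic forms x²+20y² and x²+100y². -/
/-!
Write `p = a² + b² = x² + 5y²` with `b` even. By coprimality `p` is represented by `x² + 20y²`
exactly when `y` is even, and by `x² + 100y²` exactly when `5 ∣ b`. The two are linked by the
factorization `(x + a)(x - a) = b² - 5y²`: up to square factors, `x + a` divides a primitive value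
of `b² - 5y²`, so by quadratic reciprocity it is a square modulo `5` as soon as it is odd. Applied
to `±x` and to whichever of `a`, `b` has the parity of `y`, this decides from `p mod 5` which of
`a`, `b` is divisible by `5`.
-/

open scoped NumberTheorySymbols

/-- The integer `n` is represented by the quadratic form `x² + N y²`. -/
def IsRepresentable (N n : ℤ) : Prop := ∃ x y : ℤ, n = x ^ 2 + N * y ^ 2

lemma isRepresentable_mul_sq_iff {N k n : ℤ} :
    IsRepresentable (N * k ^ 2) n ↔ ∃ x y : ℤ, n = x ^ 2 + N * y ^ 2 ∧ k ∣ y := by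
  constructor
  · rintro ⟨x, y, rfl⟩
    exact ⟨x, k * y, by ring, dvd_mul_right k y⟩
  · rintro ⟨x, _, rfl, y, rfl⟩
    exact ⟨x, y, by ring⟩

section Factorization

lemma exists_eq_sq_mul_of_mul_eq_sq_mul {n m g k : ℤ} (hg : g ≠ 0) (h : n * m = g ^ 2 * k)
    (hcop : ∀ q : ℤ, Prime q → q ∣ n → q ∣ m → ¬ q ∣ g) :
    ∃ u r : ℤ, n = u ^ 2 * r ∧ r ∣ k := by
  obtain ⟨d, e, ⟨n', rfl⟩, ⟨m', rfl⟩, hde⟩ := exists_dvd_and_dvd_of_dvd_mul (Dvd.intro k h.symm)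
  have hk : n' * m' = k :=
    mul_left_cancel₀ (pow_ne_zero 2 hg) (by rw [← h, hde]; ring)
  have hd_coprime : IsCoprime d e := by
    refine isCoprime_of_prime_dvd ?_ fun q hq hqd hqe ↦
      hcop q hq (hqd.mul_right n') (hqe.mul_right m')
        (hq.dvd_of_dvd_pow (hde ▸ hqd.mul_right e))
    rintro ⟨rfl, -⟩
    exact pow_ne_zero 2 hg (by simpa using hde)
  obtain ⟨u, rfl | rfl⟩ := Int.sq_of_isCoprime hd_coprime hde.symm
  · exact ⟨u, n', rfl, Dvd.intro m' hk⟩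
  · exact ⟨u, -n', by ring, neg_dvd.mpr (Dvd.intro m' hk)⟩

lemma jacobiSym_nonneg_of_dvd_sq_sub_mul_sq {d b y : ℤ} {n : ℕ} (hby : IsCoprime b y)
    (h : (n : ℤ) ∣ b ^ 2 - d * y ^ 2) : 0 ≤ J(d | n) := by
  have hyn : IsCoprime y n := by
    have hy : IsCoprime y (b ^ 2 - d * y ^ 2) := by
      have := hby.symm.pow_right (n := 2) |>.add_mul_left_right (-d * y)
      convert! this using 1
      ring
    exact hy.of_isCoprime_of_dvd_right h
  calc
    0 ≤ J(b | n) ^ 2 := sq_nonneg _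
    _ = J(b ^ 2 | n) := (jacobiSym.pow_left b 2 n).symm
    _ = J(d * y ^ 2 | n) := jacobiSym.mod_left' (Int.modEq_iff_dvd.mpr h).symm
    _ = J(d | n) := by
      rw [jacobiSym.mul_left, jacobiSym.sq_one' (Int.isCoprime_iff_gcd_eq_one.mp hyn), mul_one]

lemma jacobiSym_natAbs_nonneg_of_mul_eq_sq_sub_mul_sq {d b y n m : ℤ} (hn : n * m ≠ 0)
    (h : n * m = b ^ 2 - d * y ^ 2)
    (hcop : ∀ q : ℤ, Prime q → q ∣ n → q ∣ m → q ∣ b → ¬ q ∣ y) :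
    0 ≤ J(d | n.natAbs) := by
  obtain ⟨b', y', hb, hy, hunit⟩ := extract_gcd b y
  set g := gcd b y
  have hg : g ≠ 0 := by
    intro hg
    exact hn (by rw [h, hb, hy, hg]; ring)
  obtain ⟨u, r, rfl, hr⟩ := exists_eq_sq_mul_of_mul_eq_sq_mul (k := b' ^ 2 - d * y' ^ 2) hg
    (by rw [h, hb, hy]; ring)
    fun q hq hqn hqm hqg ↦
      hcop q hq hqn hqm (hqg.trans (gcd_dvd_left b y)) (hqg.trans (gcd_dvd_right b y))
  have hur : u ^ 2 ≠ 0 ∧ r ≠ 0 := mul_ne_zero_iff.mp (left_ne_zero_of_mul hn)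
  rw [Int.natAbs_mul, jacobiSym.mul_right' _ (Int.natAbs_ne_zero.mpr hur.1)
    (Int.natAbs_ne_zero.mpr hur.2), Int.natAbs_pow, jacobiSym.pow_right]
  exact mul_nonneg (sq_nonneg _) (jacobiSym_nonneg_of_dvd_sq_sub_mul_sq
    ((gcd_isUnit_iff b' y').mp hunit) (Int.natAbs_dvd.mpr hr))

lemma jacobiSym_natAbs_add_nonneg {d a b x y : ℤ} (h : a ^ 2 + b ^ 2 = x ^ 2 + d * y ^ 2)
    (hxy : IsCoprime x y) (hodd : Odd (x + a)) : 0 ≤ J(d | (x + a).natAbs) := by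
  have hne : (x + a) * (x - a) ≠ 0 := by
    have hsub : Odd (x - a) := by grind
    exact mul_ne_zero (by grind) (by grind)
  refine jacobiSym_natAbs_nonneg_of_mul_eq_sq_sub_mul_sq (b := b) (y := y) hne
    (by linear_combination -h) fun q hq hadd hsub _ hqy ↦ ?_
  have h2x : q ∣ 2 * x := by
    convert! dvd_add hadd hsub using 1
    ring
  rcases hq.dvd_or_dvd h2x with hq2 | hqx
  · exact hq.not_isUnit ((Int.isCoprime_two_right.mpr hodd).isUnit_of_dvd' hadd hq2)
  · exact hq.not_isUnit (hxy.isUnit_of_dvd' hqx hqy)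

lemma isSquare_zmod_of_jacobiSym_natAbs_nonneg {q : ℕ} [Fact q.Prime] (hq : q % 4 = 1) {n : ℤ}
    (hn : Odd n) (h : 0 ≤ J(q | n.natAbs)) : IsSquare (n : ZMod q) := by
  have habs : IsSquare ((n.natAbs : ℤ) : ZMod q) := by
    rw [jacobiSym.quadratic_reciprocity_one_mod_four hq (Int.natAbs_odd.mpr hn)] at h
    by_contra hns
    rw [ZMod.nonsquare_iff_jacobiSym_eq_neg_one.mpr hns] at h
    norm_num at h
  have hneg : IsSquare (-1 : ZMod q) := ZMod.exists_sq_eq_neg_one_iff.mpr (by omega)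
  rcases Int.natAbs_eq n with hn' | hn' <;> rw [hn']
  · exact habs
  · rw [Int.cast_neg, ← neg_one_mul]
    exact hneg.mul habs

theorem isSquare_zmod_add_of_sq_add_sq_eq {q : ℕ} [Fact q.Prime] (hq : q % 4 = 1) {a b x y : ℤ}
    (h : a ^ 2 + b ^ 2 = x ^ 2 + q * y ^ 2) (hxy : IsCoprime x y) (hodd : Odd (x + a)) :
    IsSquare ((x + a : ℤ) : ZMod q) :=
  isSquare_zmod_of_jacobiSym_natAbs_nonneg hq hodd (jacobiSym_natAbs_add_nonneg h hxy hodd)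

lemma isCoprime_of_squarefree_sq_add_mul_sq {x y d : ℤ} (h : Squarefree (x ^ 2 + d * y ^ 2)) :
    IsCoprime x y := by
  refine (gcd_isUnit_iff x y).mp (h _ ?_)
  rw [← sq]
  exact dvd_add (pow_dvd_pow_of_dvd (gcd_dvd_left x y) 2)
    ((pow_dvd_pow_of_dvd (gcd_dvd_right x y) 2).mul_left d)

end Factorization

section ModFive

-- Nonzero squares mod `5` are `±1`, and a sum of two of them, `0` or `±2`, is never one.
lemma zmod_five_eq_zero_iff_ne_zero :
    ∀ {a b x : ZMod 5}, a ^ 2 + b ^ 2 = x ^ 2 → x ≠ 0 → (a = 0 ↔ b ≠ 0) := by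
  decide

-- If `b = 0`, then `x` is a square. Otherwise `a = 0` and `b = ±x`, so one of `±x + b` is `2b`,
-- which is a square only for `b = ±2`.
lemma zmod_five_eq_zero_iff_sq_eq_one :
    ∀ {a b x : ZMod 5}, a ^ 2 + b ^ 2 = x ^ 2 → x ≠ 0 → IsSquare (x + b) → IsSquare (-x + b) →
      (b = 0 ↔ x ^ 2 = 1) := by
  decide

lemma five_dvd_iff_of_sq_add_sq_eq {a b x y : ℤ} (h : a ^ 2 + b ^ 2 = x ^ 2 + 5 * y ^ 2)
    (hxy : IsCoprime x y) (hodd : Odd (x + b)) (hx : (x : ZMod 5) ≠ 0) :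
    5 ∣ b ↔ (x : ZMod 5) ^ 2 = 1 := by
  have : Fact (Nat.Prime 5) := ⟨Nat.prime_five⟩
  have hmod : (a : ZMod 5) ^ 2 + (b : ZMod 5) ^ 2 = (x : ZMod 5) ^ 2 := by
    have := congrArg (Int.cast : ℤ → ZMod 5) h
    push_cast at this
    rw [this, show (5 : ZMod 5) = 0 from rfl, zero_mul, add_zero]
  have hpos : IsSquare ((x + b : ℤ) : ZMod 5) :=
    isSquare_zmod_add_of_sq_add_sq_eq (q := 5) (b := a) (y := y) rfl
      (by push_cast; linear_combination h) hxy hodd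
  have hneg : IsSquare ((-x + b : ℤ) : ZMod 5) :=
    isSquare_zmod_add_of_sq_add_sq_eq (q := 5) (b := a) (y := y) rfl
      (by push_cast; linear_combination h) hxy.neg_left (by grind)
  push_cast at hpos hneg
  rw [← zmod_five_eq_zero_iff_sq_eq_one hmod hx hpos hneg]
  exact (ZMod.intCast_zmod_eq_zero_iff_dvd b 5).symm

theorem even_iff_five_dvd_iff {n a b x y : ℤ} (hab : n = a ^ 2 + b ^ 2)
    (hxy : n = x ^ 2 + 5 * y ^ 2) (hcop : IsCoprime x y) (hn : ¬ 5 ∣ n) (hodd : Odd n)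
    (hb : Even b) : Even y ↔ (5 ∣ b ↔ n ≡ 1 [ZMOD 5]) := by
  have hx : ((n : ℤ) : ZMod 5) = (x : ZMod 5) ^ 2 := by
    rw [hxy]
    push_cast
    rw [show (5 : ZMod 5) = 0 from rfl, zero_mul, add_zero]
  have hdvd (z : ℤ) : 5 ∣ z ↔ (z : ZMod 5) = 0 := (ZMod.intCast_zmod_eq_zero_iff_dvd z 5).symm
  have hx0 : (x : ZMod 5) ≠ 0 := by
    intro h0
    exact hn ((hdvd n).mpr (by rw [hx, h0]; rfl))
  have hn1 : n ≡ 1 [ZMOD 5] ↔ (x : ZMod 5) ^ 2 = 1 := by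
    simpa [hx] using (ZMod.intCast_eq_intCast_iff n 1 5).symm
  have hexcl : 5 ∣ a ↔ ¬ 5 ∣ b := by
    rw [hdvd, hdvd]
    refine zmod_five_eq_zero_iff_ne_zero ?_ hx0
    rw [← hx, hab]
    push_cast
    rfl
  have ha : Odd a := by
    rw [hab, Int.odd_add, Int.odd_pow' two_ne_zero, Int.even_pow' two_ne_zero] at hodd
    exact hodd.mpr hb
  have hpar : Odd x ↔ Even y := by
    rw [hxy, Int.odd_add, Int.odd_pow' two_ne_zero, Int.even_mul, Int.even_pow' two_ne_zero] at hodd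
    simpa [show ¬ Even (5 : ℤ) by decide] using hodd
  by_cases hy : Even y
  · have := five_dvd_iff_of_sq_add_sq_eq (by rw [← hab, hxy]) hcop (b := b) (by grind) hx0
    rw [hn1]
    tauto
  · have := five_dvd_iff_of_sq_add_sq_eq (a := b) (b := a) (by rw [← hxy, hab, add_comm]) hcop
      (by grind) hx0
    rw [hn1]
    tauto

end ModFive

section Existence

/-- Thue's lemma. -/
lemma exists_intCast_eq_mul_and_sq_lt {n : ℕ} (hn : ¬ IsSquare n) (s : ZMod n) :
    ∃ x y : ℤ, (x : ZMod n) = s * y ∧ (x ≠ 0 ∨ y ≠ 0) ∧ x ^ 2 < n ∧ y ^ 2 < n := by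
  have : NeZero n := ⟨fun h ↦ hn (h ▸ IsSquare.zero)⟩
  set r := Nat.sqrt n
  have hrn : r * r < n := (Nat.sqrt_le n).lt_of_ne fun h ↦ hn ⟨r, h.symm⟩
  let S := Finset.range (r + 1) ×ˢ Finset.range (r + 1)
  have hcard : (Finset.univ : Finset (ZMod n)).card < S.card := by
    rw [Finset.card_univ, ZMod.card, Finset.card_product, Finset.card_range]
    exact Nat.lt_succ_sqrt n
  obtain ⟨u, hu, v, hv, huv, hf⟩ := Finset.exists_ne_map_eq_of_card_lt_of_maps_to hcard
    (f := fun w : ℕ × ℕ ↦ (w.1 : ZMod n) - s * w.2) fun _ _ ↦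
      Finset.mem_coe.mpr (Finset.mem_univ _)
  simp only [S, Finset.mem_product, Finset.mem_range] at hu hv
  have sub_sq_lt {c d : ℕ} (hc : c < r + 1) (hd : d < r + 1) : ((c : ℤ) - d) ^ 2 < n := by
    calc
      ((c : ℤ) - d) ^ 2 ≤ (r : ℤ) ^ 2 := sq_le_sq' (by omega) (by omega)
      _ < n := by rw [sq]; exact_mod_cast hrn
  refine ⟨u.1 - v.1, u.2 - v.2, ?_, ?_, sub_sq_lt hu.1 hv.1, sub_sq_lt hu.2 hv.2⟩
  · push_cast
    linear_combination hf
  · by_contra! hzero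
    exact huv (Prod.ext (by omega) (by omega))

lemma exists_mul_eq_sq_add_mul_sq {n d : ℕ} (hn : ¬ IsSquare n) (hd : 0 < d)
    (hs : IsSquare (-d : ZMod n)) :
    ∃ k x y : ℤ, 0 < k ∧ k ≤ d ∧ k * n = x ^ 2 + d * y ^ 2 := by
  obtain ⟨s, hs⟩ := hs
  obtain ⟨x, y, hxy, hne, hx, hy⟩ := exists_intCast_eq_mul_and_sq_lt hn s
  have hdvd : (n : ℤ) ∣ x ^ 2 + d * y ^ 2 := by
    rw [← ZMod.intCast_zmod_eq_zero_iff_dvd]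
    push_cast
    rw [hxy]
    linear_combination -(y : ZMod n) ^ 2 * hs
  obtain ⟨k, hk⟩ := hdvd
  have hpos : 0 < x ^ 2 + d * y ^ 2 := by
    rcases hne with h | h <;> positivity
  have hlt : n * k < n * (d + 1) := by
    rw [← hk]
    nlinarith
  exact ⟨k, x, y, pos_of_mul_pos_right (hk ▸ hpos) n.cast_nonneg,
    Int.lt_add_one_iff.mp (lt_of_mul_lt_mul_left hlt n.cast_nonneg), by rw [hk, mul_comm]⟩

lemma isSquare_neg_five_zmod {p : ℕ} [Fact p.Prime] (h4 : p % 4 = 1)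
    (h5 : p % 5 = 1 ∨ p % 5 = 4) : IsSquare (-5 : ZMod p) := by
  have : Fact (Nat.Prime 5) := ⟨Nat.prime_five⟩
  have hneg : IsSquare (-1 : ZMod p) := ZMod.exists_sq_eq_neg_one_iff.mpr (by omega)
  have hfive : IsSquare ((5 : ℕ) : ZMod p) := by
    rw [ZMod.exists_sq_eq_prime_iff_of_mod_four_eq_one h4 (by omega), ← ZMod.natCast_mod]
    rcases h5 with h5 | h5 <;> rw [h5]
    · exact ⟨1, rfl⟩
    · exact ⟨2, rfl⟩
  simpa using hneg.mul hfive

lemma exists_eq_sq_add_sq_and_even {p : ℕ} (hp : p.Prime) (h4 : p % 4 = 1) :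
    ∃ a b : ℤ, (p : ℤ) = a ^ 2 + b ^ 2 ∧ Even b := by
  have : Fact p.Prime := ⟨hp⟩
  obtain ⟨a, b, hab⟩ := Nat.Prime.sq_add_sq (p := p) (by omega)
  have hab' : (p : ℤ) = (a : ℤ) ^ 2 + (b : ℤ) ^ 2 := by exact_mod_cast hab.symm
  have hodd : Odd ((a : ℤ) ^ 2 + (b : ℤ) ^ 2) := hab' ▸ Int.odd_iff.mpr (by omega)
  rw [Int.odd_add, Int.odd_pow' two_ne_zero, Int.even_pow' two_ne_zero] at hodd
  rcases Int.even_or_odd a with ha | ha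
  · exact ⟨b, a, by rw [hab', add_comm], ha⟩
  · exact ⟨a, b, hab', hodd.mp ha⟩

lemma sq_emod_five (x : ℤ) : x ^ 2 % 5 = 0 ∨ x ^ 2 % 5 = 1 ∨ x ^ 2 % 5 = 4 := by
  have hx : x % 5 = 0 ∨ x % 5 = 1 ∨ x % 5 = 2 ∨ x % 5 = 3 ∨ x % 5 = 4 := by omega
  rcases hx with h | h | h | h | h <;> simp [sq, Int.mul_emod, h]

lemma even_and_even_of_four_dvd {x y : ℤ} (h : 4 ∣ x ^ 2 + 5 * y ^ 2) : Even x ∧ Even y := by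
  have sq_emod_four (z : ℤ) : Even z ∧ z ^ 2 % 4 = 0 ∨ z ^ 2 % 4 = 1 :=
    (Int.even_or_odd z).imp
      (fun hz ↦ ⟨hz, Int.emod_eq_zero_of_dvd (pow_dvd_pow_of_dvd hz.two_dvd 2)⟩)
      Int.sq_mod_four_eq_one_of_odd
  rcases sq_emod_four x with hx | hx <;> rcases sq_emod_four y with hy | hy
  · exact ⟨hx.1, hy.1⟩
  all_goals omega

theorem isRepresentable_five_of_prime {p : ℕ} (hp : p.Prime) (h4 : p % 4 = 1)
    (h5 : p % 5 = 1 ∨ p % 5 = 4) : IsRepresentable 5 p := by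
  have : Fact p.Prime := ⟨hp⟩
  obtain ⟨k, x, y, hk_pos, hk_le, hk⟩ := exists_mul_eq_sq_add_mul_sq (d := 5) hp.prime.not_isSquare
    (by norm_num) (isSquare_neg_five_zmod h4 h5)
  push_cast at hk_le hk
  have hx5 := sq_emod_five x
  interval_cases k
  · exact ⟨x, y, by linarith⟩
  · omega
  · omega
  · obtain ⟨⟨u, rfl⟩, v, rfl⟩ := even_and_even_of_four_dvd (Dvd.intro _ hk)
    exact ⟨u, v, by linarith⟩
  · have hdvd : 5 ∣ x ^ 2 := by omega
    obtain ⟨u, rfl⟩ := (Int.prime_ofNat_iff.mpr Nat.prime_five).dvd_of_dvd_pow hdvd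
    exact ⟨y, u, by linarith⟩

end Existence

theorem isRepresentable_twenty_iff {p : ℕ} (hp : p.Prime) (h4 : p % 4 = 1)
    (h5 : p % 5 = 1 ∨ p % 5 = 4) :
    IsRepresentable 20 p ↔ (IsRepresentable 100 p ↔ (p : ℤ) ≡ 1 [ZMOD 5]) := by
  have hodd : Odd (p : ℤ) := Int.odd_iff.mpr (by omega)
  have key {a b x y : ℤ} (hab : (p : ℤ) = a ^ 2 + b ^ 2) (hb : Even b)
      (hxy : (p : ℤ) = x ^ 2 + 5 * y ^ 2) : Even y ↔ (5 ∣ b ↔ (p : ℤ) ≡ 1 [ZMOD 5]) := by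
    have hcop : IsCoprime x y := isCoprime_of_squarefree_sq_add_mul_sq
      (hxy ▸ (Nat.prime_iff_prime_int.mp hp).squarefree)
    exact even_iff_five_dvd_iff hab hxy hcop (by omega) hodd hb
  obtain ⟨a, b, hab, hb⟩ := exists_eq_sq_add_sq_and_even hp h4
  obtain ⟨x, y, hxy⟩ := isRepresentable_five_of_prime hp h4 h5
  have h20 : IsRepresentable 20 p ↔ Even y := by
    rw [show (20 : ℤ) = 5 * 2 ^ 2 by norm_num, isRepresentable_mul_sq_iff]
    refine ⟨fun ⟨x', y', hxy', hy'⟩ ↦ ?_, fun hy ↦ ⟨x, y, hxy, hy.two_dvd⟩⟩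
    exact (key hab hb hxy).mpr ((key hab hb hxy').mp (even_iff_two_dvd.mpr hy'))
  have h100 : IsRepresentable 100 p ↔ 5 ∣ b := by
    rw [show (100 : ℤ) = 1 * 10 ^ 2 by norm_num, isRepresentable_mul_sq_iff]
    constructor
    · rintro ⟨a', b', hab', hb'⟩
      have h5b' : 5 ∣ b' := by omega
      have hrep := key hab hb hxy
      have hrep' := key (hab'.trans (by rw [one_mul])) (Int.even_iff.mpr (by omega)) hxy
      tauto
    · intro h5b
      have hb2 : b % 2 = 0 := Int.even_iff.mp hb
      exact ⟨a, b, by rw [hab, one_mul], by omega⟩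
  rw [h20, h100]
  exact key hab hb hxy

theorem kaplansky_like_1 (p : ℕ) (hp : p.Prime) :
    (p % 20 = 1 → ((∃ x y : ℤ, (p : ℤ) = x ^ 2 + 20 * y ^ 2) ↔
      (∃ x y : ℤ, (p : ℤ) = x ^ 2 + 100 * y ^ 2))) ∧
    (p % 20 = 9 → Xor' (∃ x y : ℤ, (p : ℤ) = x ^ 2 + 20 * y ^ 2)
      (∃ x y : ℤ, (p : ℤ) = x ^ 2 + 100 * y ^ 2)) := by
  change (p % 20 = 1 → (IsRepresentable 20 p ↔ IsRepresentable 100 p)) ∧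
    (p % 20 = 9 → Xor (IsRepresentable 20 p) (IsRepresentable 100 p))
  constructor <;> intro h
  · have h1 : (p : ℤ) ≡ 1 [ZMOD 5] := by
      rw [Int.ModEq]
      omega
    rw [isRepresentable_twenty_iff hp (by omega) (by omega), iff_true_right h1]
  · have h1 : ¬ (p : ℤ) ≡ 1 [ZMOD 5] := by
      rw [Int.ModEq]
      omega
    rw [xor_iff_iff_not, isRepresentable_twenty_iff hp (by omega) (by omega), iff_false_right h1]
end

section
/- Let p be a prime with p ≡ 1, 65, or 81 (mod 112). Then p is representable by x²+14y² if and only if p is representable by x²+448y². Let p be a prime with p ≡ 9, 25, or 57 (mod 112). Then p is representable by exactly one of the quadratic forms x²+14y² and x²+448y². -/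
/-!
Let `p ≡ 1 (mod 8)` be a prime which is a nonzero square modulo `7`; such primes fill the six
residue classes of the theorem. Reduction of the forms of determinant `7` and `14` shows that
`p = a² + 112 c²`, and that `p` is represented by `x² + 14 y²` or by `2 x² + 7 y²`. The norm of
`(3 + √-7)(a + 4c√-7)`, respectively of `(1 + √-7)(a + 4c√-7)`, gives
* `(4x + 3a - 28c)(4x - 3a + 28c) = 7 ((a + 12c)² - 2 (4y)²)` if `p = x² + 14 y²`,
* `(4x + a - 28c)(4x - a + 28c) = 7 ((a + 4c)² - 2 (2y)²)` if `p = 2 x² + 7 y²`.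

A prime `q` with `(2 / q) = -1` cannot divide both factors on the left, so it divides the first one
to an even power, as it does every norm from `ℤ[√2]`. Hence the first factor is `±1 (mod 8)`. Since
`a` and `x` are odd, it is congruent to `-(a - 4c)`, respectively to `(a - 4c) + 4`; so
`p = x² + 14 y²` exactly when `a - 4c ≡ ±1 (mod 8)`. Finally `a ≡ ±1 (mod 8)` if and only if
`p ≡ 1 (mod 16)`, and an even `c` turns `112 c²` into `448 (c / 2)²`.
-/

open scoped NumberTheorySymbols

/-- The integral binary quadratic form `a x² + 2 b x y + c y²`. As in Gauss, the middle coefficient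
is even and only its half is recorded. It is used to find representations of primes by
reduction. -/
structure BinaryForm where
  a : ℤ
  b : ℤ
  c : ℤ

namespace BinaryForm

/-- Gauss's determinant `a c - b²` (up to sign), positive for definite forms. -/
def det (f : BinaryForm) : ℤ := f.a * f.c - f.b ^ 2

/-- `f` represents `m` if it takes the value `m` at some integers, not necessarily coprime. -/
def Represents (f : BinaryForm) (m : ℤ) : Prop :=
  ∃ x y : ℤ, m = f.a * x ^ 2 + 2 * f.b * x * y + f.c * y ^ 2

/-- Lagrange's reduced positive definite forms. The boundary cases are kept, so a class may contain
two reduced forms. -/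
structure IsReduced (f : BinaryForm) : Prop where
  pos : 0 < f.a
  abs_two_mul_le : |2 * f.b| ≤ f.a
  le : f.a ≤ f.c

/-- The equivalent form `f (x + k y, y)`. -/
def translate (f : BinaryForm) (k : ℤ) : BinaryForm :=
  ⟨f.a, f.b + k * f.a, f.c + 2 * k * f.b + k ^ 2 * f.a⟩

/-- The equivalent form `f (y, x)`. -/
def swap (f : BinaryForm) : BinaryForm := ⟨f.c, f.b, f.a⟩

variable {f : BinaryForm} {m : ℤ}

theorem det_translate (f : BinaryForm) (k : ℤ) : (f.translate k).det = f.det := by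
  simp only [det, translate]
  ring

theorem det_swap (f : BinaryForm) : f.swap.det = f.det := by
  simp only [det, swap]
  ring

theorem Represents.translate (h : f.Represents m) (k : ℤ) : (f.translate k).Represents m := by
  obtain ⟨x, y, rfl⟩ := h
  refine ⟨x - k * y, y, ?_⟩
  simp only [BinaryForm.translate]
  ring

theorem Represents.swap (h : f.Represents m) : f.swap.Represents m := by
  obtain ⟨x, y, rfl⟩ := h
  refine ⟨y, x, ?_⟩
  simp only [BinaryForm.swap]
  ring

theorem exists_translate_abs_two_mul_le (ha : 0 < f.a) :
    ∃ k, |2 * (f.translate k).b| ≤ f.a := by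
  -- Division of `2 b + a` by `2 a` rounds `b / a` to the nearest integer.
  refine ⟨-((2 * f.b + f.a) / (2 * f.a)), ?_⟩
  have hdiv := Int.emod_add_mul_ediv (2 * f.b + f.a) (2 * f.a)
  have hnonneg := Int.emod_nonneg (2 * f.b + f.a) (b := 2 * f.a) (by lia)
  have hlt := Int.emod_lt_of_pos (2 * f.b + f.a) (b := 2 * f.a) (by lia)
  rw [abs_le]
  simp only [translate]
  constructor <;> linarith

theorem c_pos_of_det_pos (ha : 0 < f.a) (hdet : 0 < f.det) : 0 < f.c := by
  have : 0 < f.a * f.c := by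
    have := sq_nonneg f.b
    rw [det] at hdet
    linarith
  exact pos_of_mul_pos_right this ha.le

theorem Represents.exists_isReduced (hm : f.Represents m) (ha : 0 < f.a) (hdet : 0 < f.det) :
    ∃ g : BinaryForm, g.IsReduced ∧ g.det = f.det ∧ g.Represents m := by
  induction hn : f.a.toNat using Nat.strong_induction_on generalizing f with
  | _ n ih =>
    obtain ⟨k, hk⟩ := exists_translate_abs_two_mul_le ha
    have hdet_g := det_translate f k
    have hm_g := hm.translate k
    set g := f.translate k
    have ha_g : g.a = f.a := rfl
    by_cases hle : g.a ≤ g.c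
    · exact ⟨g, ⟨ha, hk, hle⟩, hdet_g, hm_g⟩
    · have hc : 0 < g.c := c_pos_of_det_pos ha (hdet_g ▸ hdet)
      have ha_swap : g.swap.a = g.c := rfl
      rw [← hdet_g, ← det_swap g] at hdet ⊢
      exact ih g.swap.a.toNat (by lia) hm_g.swap hc hdet rfl

theorem exists_isReduced_of_isSquare {n : ℕ} [NeZero n] {d : ℤ} (hd : 0 < d)
    (h : IsSquare ((-d : ℤ) : ZMod n)) :
    ∃ g : BinaryForm, g.IsReduced ∧ g.det = d ∧ g.Represents n := by
  obtain ⟨t, ht⟩ := h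
  obtain ⟨s, rfl⟩ := ZMod.intCast_surjective t
  obtain ⟨c, hc⟩ : (n : ℤ) ∣ s ^ 2 + d := by
    rw [← ZMod.intCast_zmod_eq_zero_iff_dvd]
    push_cast at ht ⊢
    linear_combination -ht
  have hdet : det ⟨n, s, c⟩ = d := by
    simp only [det]
    linarith
  have hrep : Represents ⟨n, s, c⟩ n := ⟨1, 0, by ring⟩
  have hn : (0 : ℤ) < n := mod_cast Nat.pos_of_neZero n
  simpa only [hdet] using hrep.exists_isReduced hn (hdet ▸ hd)

theorem IsReduced.three_mul_sq_le (hf : f.IsReduced) : 3 * f.a ^ 2 ≤ 4 * f.det := by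
  have hb : (2 * f.b) ^ 2 ≤ f.a ^ 2 :=
    sq_le_sq.mpr (hf.abs_two_mul_le.trans (le_abs_self _))
  have hac : f.a * f.a ≤ f.a * f.c := mul_le_mul_of_nonneg_left hf.le hf.pos.le
  rw [det]
  linarith

theorem IsReduced.eq_of_det_eq_seven (hf : f.IsReduced) (hdet : f.det = 7) :
    f = ⟨1, 0, 7⟩ ∨ f = ⟨2, 1, 4⟩ ∨ f = ⟨2, -1, 4⟩ := by
  have ha_sq := hf.three_mul_sq_le
  obtain ⟨a, b, c⟩ := f
  obtain ⟨ha_pos, hb, hac⟩ := hf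
  simp only [det, abs_le, BinaryForm.mk.injEq] at *
  have ha : a < 4 := by nlinarith
  have hb_lower : -1 ≤ b := by lia
  have hb_upper : b ≤ 1 := by lia
  interval_cases a <;> interval_cases b <;> lia

theorem IsReduced.eq_of_det_eq_fourteen (hf : f.IsReduced) (hdet : f.det = 14) :
    f = ⟨1, 0, 14⟩ ∨ f = ⟨2, 0, 7⟩ ∨ f = ⟨3, 1, 5⟩ ∨ f = ⟨3, -1, 5⟩ := by
  have ha_sq := hf.three_mul_sq_le
  obtain ⟨a, b, c⟩ := f
  obtain ⟨ha_pos, hb, hac⟩ := hf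
  simp only [det, abs_le, BinaryForm.mk.injEq] at *
  have ha : a < 5 := by nlinarith
  have hb_lower : -2 ≤ b := by lia
  have hb_upper : b ≤ 2 := by lia
  interval_cases a <;> interval_cases b <;> lia

end BinaryForm

section Representations

open BinaryForm

theorem exists_eq_sq_add_seven_mul_sq {n : ℕ} (hn : Odd n) (h : IsSquare ((-7 : ℤ) : ZMod n)) :
    ∃ a b : ℤ, (n : ℤ) = a ^ 2 + 7 * b ^ 2 := by
  have : NeZero n := ⟨hn.pos.ne'⟩
  obtain ⟨g, hg, hdet, x, y, hxy⟩ := exists_isReduced_of_isSquare (by norm_num) h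
  rcases hg.eq_of_det_eq_seven hdet with rfl | rfl | rfl
  · exact ⟨x, y, by linear_combination hxy⟩
  · have heven : Even (n : ℤ) :=
      even_iff_two_dvd.mpr ⟨x ^ 2 + x * y + 2 * y ^ 2, by linear_combination hxy⟩
    exact absurd hn (Nat.not_odd_iff_even.mpr (mod_cast heven))
  · have heven : Even (n : ℤ) :=
      even_iff_two_dvd.mpr ⟨x ^ 2 - x * y + 2 * y ^ 2, by linear_combination hxy⟩
    exact absurd hn (Nat.not_odd_iff_even.mpr (mod_cast heven))

theorem exists_eq_sq_add_112_mul_sq {n : ℕ} (hn : n % 8 = 1)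
    (h : IsSquare ((-7 : ℤ) : ZMod n)) : ∃ a c : ℤ, (n : ℤ) = a ^ 2 + 112 * c ^ 2 := by
  obtain ⟨a, b, hab⟩ := exists_eq_sq_add_seven_mul_sq (Nat.odd_iff.mpr (by lia)) h
  have hb_cases : (b : ZMod 8) = 0 ∨ (b : ZMod 8) = 4 := by
    have hmod : ∀ s t : ZMod 8, 1 = s ^ 2 + 7 * t ^ 2 → t = 0 ∨ t = 4 := by decide
    refine hmod a b ?_
    have hn' : (n : ZMod 8) = 1 := by rw [← ZMod.natCast_mod, hn, Nat.cast_one]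
    rw [← hn']
    exact_mod_cast congrArg (Int.cast : ℤ → ZMod 8) hab
  obtain ⟨c, rfl⟩ : (4 : ℤ) ∣ b := by
    have hdvd : (8 : ℤ) ∣ 2 * b := by
      refine (ZMod.intCast_zmod_eq_zero_iff_dvd _ 8).mp ?_
      push_cast
      rcases hb_cases with hb | hb <;> rw [hb] <;> decide
    lia
  exact ⟨a, c, by rw [hab]; ring⟩

theorem jacobiSym_seven_ne_one_of_three_mul_eq {n u v : ℤ} (h : 3 * n = u ^ 2 + 14 * v ^ 2) :
    J(n | 7) ≠ 1 := by
  intro hn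
  have hsq : J(3 * n | 7) = J(u | 7) ^ 2 := by
    rw [h, ← jacobiSym.pow_left]
    exact jacobiSym.mod_left' (by push_cast; lia)
  have hthree : J(3 | 7) = -1 := by norm_num
  rw [jacobiSym.mul_left, hthree, hn] at hsq
  linarith [sq_nonneg J(u | 7)]

theorem exists_eq_sq_add_fourteen_mul_sq_or {n : ℕ} (h : IsSquare ((-14 : ℤ) : ZMod n))
    (h7 : J(n | 7) = 1) :
    (∃ x y : ℤ, (n : ℤ) = x ^ 2 + 14 * y ^ 2) ∨
      ∃ x y : ℤ, (n : ℤ) = 2 * x ^ 2 + 7 * y ^ 2 := by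
  have : NeZero n := ⟨by rintro rfl; norm_num at h7⟩
  obtain ⟨g, hg, hdet, x, y, hxy⟩ := exists_isReduced_of_isSquare (by norm_num) h
  rcases hg.eq_of_det_eq_fourteen hdet with rfl | rfl | rfl | rfl
  · exact Or.inl ⟨x, y, by linear_combination hxy⟩
  · exact Or.inr ⟨x, y, by linear_combination hxy⟩
  · have h3 : 3 * (n : ℤ) = (3 * x + y) ^ 2 + 14 * y ^ 2 := by linear_combination 3 * hxy
    exact absurd h7 (jacobiSym_seven_ne_one_of_three_mul_eq h3)
  · have h3 : 3 * (n : ℤ) = (3 * x - y) ^ 2 + 14 * y ^ 2 := by linear_combination 3 * hxy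
    exact absurd h7 (jacobiSym_seven_ne_one_of_three_mul_eq h3)

end Representations

section Residues

variable {p : ℕ}

theorem jacobiSym_neg_seven_eq_one (hp : p % 8 = 1) (h7 : J(p | 7) = 1) : J(-7 | p) = 1 := by
  have hodd : Odd p := Nat.odd_iff.mpr (by lia)
  rw [jacobiSym.neg 7 hodd, ZMod.χ₄_nat_one_mod_four (by lia), one_mul, ← h7]
  exact jacobiSym.quadratic_reciprocity_one_mod_four' (by decide) (by lia)

theorem jacobiSym_neg_fourteen_eq_one (hp : p % 8 = 1) (h7 : J(p | 7) = 1) : J(-14 | p) = 1 := by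
  have htwo : J(2 | p) = 1 := by
    rw [jacobiSym.at_two (Nat.odd_iff.mpr (by lia)), ZMod.χ₈_nat_mod_eight, hp]
    decide
  rw [show (-14 : ℤ) = 2 * -7 by norm_num, jacobiSym.mul_left, htwo,
    jacobiSym_neg_seven_eq_one hp h7, one_mul]

theorem jacobiSym_seven_eq_one_of_mod (h : p % 7 = 1 ∨ p % 7 = 2 ∨ p % 7 = 4) :
    J(p | 7) = 1 := by
  rw [jacobiSym.mod_left]
  norm_cast
  rcases h with h | h | h <;> rw [h] <;> norm_num

theorem odd_iff_of_eq_sq_add_two_mul {n a k : ℤ} (h : n = a ^ 2 + 2 * k) : Odd n ↔ Odd a := by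
  simp [h, parity_simps]

theorem emod_eight_iff_emod_sixteen_eq_one {n a k : ℤ} (ha : Odd a) (h : n = a ^ 2 + 16 * k) :
    (a % 8 = 1 ∨ a % 8 = 7) ↔ n % 16 = 1 := by
  obtain ⟨d, r, hr, rfl⟩ : ∃ d r : ℤ, (r = 1 ∨ r = 3 ∨ r = 5 ∨ r = 7) ∧ a = 8 * d + r :=
    ⟨a / 8, a % 8, by grind, by lia⟩
  have hn : n = 16 * (4 * d ^ 2 + d * r + k) + r ^ 2 := by rw [h]; ring
  rcases hr with rfl | rfl | rfl | rfl <;> lia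

end Residues

theorem jacobiSym_natAbs_ne_neg_one_of_mul_eq_sq_sub {d m n x y : ℤ}
    (h : m * n = x ^ 2 - d * y ^ 2)
    (hmn : ∀ q : ℕ, q.Prime → J(d | q) = -1 → (q : ℤ) ∣ m → ¬ (q : ℤ) ∣ n) :
    J(d | m.natAbs) ≠ -1 := by
  induction hk : m.natAbs using Nat.strong_induction_on generalizing m x y with
  | _ k ih =>
    subst hk
    intro hm
    -- A prime `q ∣ m` with `J(d | q) = -1` divides `x` and `y`, so `q ^ 2` splits off from `m`.
    have hm0 : m ≠ 0 := by
      rintro rfl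
      norm_num at hm
    obtain ⟨q, hq, hqm, hdq⟩ := jacobiSym.eq_neg_one_at_prime_divisor_of_eq_neg_one hm
    have : Fact q.Prime := ⟨hq⟩
    have hqm' : (q : ℤ) ∣ m := Int.natCast_dvd.mpr hqm
    obtain ⟨⟨x', rfl⟩, ⟨y', rfl⟩⟩ :=
      jacobiSym.prime_dvd_of_eq_neg_one hdq (h ▸ hqm'.mul_right n)
    obtain ⟨m', rfl⟩ : (q : ℤ) ^ 2 ∣ m :=
      (Nat.prime_iff_prime_int.mp hq).pow_dvd_of_dvd_mul_right 2 (hmn q hq hdq hqm')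
        ⟨x' ^ 2 - d * y' ^ 2, by rw [h]; ring⟩
    have hq0 : (q : ℤ) ^ 2 ≠ 0 := pow_ne_zero 2 (mod_cast hq.ne_zero)
    have hm'0 : m' ≠ 0 := right_ne_zero_of_mul hm0
    have : NeZero m'.natAbs := ⟨Int.natAbs_ne_zero.mpr hm'0⟩
    have hnatAbs : ((q : ℤ) ^ 2 * m').natAbs = q ^ 2 * m'.natAbs := by
      simp [Int.natAbs_mul, Int.natAbs_pow]
    refine ih m'.natAbs ?_ (x := x') (y := y') ?_
      (fun r hr hdr hrm => hmn r hr hdr (hrm.mul_left _)) rfl ?_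
    · rw [hnatAbs]
      exact lt_mul_of_one_lt_left (Int.natAbs_pos.mpr hm'0) (Nat.one_lt_pow two_ne_zero hq.one_lt)
    · refine mul_left_cancel₀ hq0 ?_
      linear_combination h
    · rwa [hnatAbs, jacobiSym.mul_right, jacobiSym.pow_right, hdq, neg_one_sq, one_mul] at hm

theorem emod_eight_of_jacobiSym_two_ne_neg_one {m : ℤ} (hm : Odd m)
    (h : J(2 | m.natAbs) ≠ -1) : m % 8 = 1 ∨ m % 8 = 7 := by
  rw [jacobiSym.at_two (Int.natAbs_odd.mpr hm), ZMod.χ₈_nat_eq_if_mod_eight] at h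
  grind

theorem isCoprime_of_prime_eq {p : ℕ} (hp : p.Prime) {k l x y : ℤ}
    (h : (p : ℤ) = k * x ^ 2 + l * y ^ 2) : IsCoprime x y := by
  have hsq := (Nat.prime_iff_prime_int.mp hp).squarefree
  refine IsRelPrime.isCoprime fun g ⟨x', hx⟩ ⟨y', hy⟩ => hsq g ⟨k * x' ^ 2 + l * y' ^ 2, ?_⟩
  rw [h, hx, hy]
  ring

theorem emod_eight_of_mul_eq_seven_mul_sq_sub {x y u v : ℤ} {j : ℕ} (hxy : IsCoprime x y)
    (hu : Odd u) (h : (4 * x + u) * (4 * x - u) = 7 * (v ^ 2 - 2 * (2 ^ j * y) ^ 2)) :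
    (4 * x + u) % 8 = 1 ∨ (4 * x + u) % 8 = 7 := by
  have hnorm : (4 * x + u) * (7 * (4 * x - u)) = (7 * v) ^ 2 - 2 * (7 * (2 ^ j * y)) ^ 2 := by
    linear_combination 7 * h
  have hodd : Odd (4 * x + u) := by grind
  refine emod_eight_of_jacobiSym_two_ne_neg_one hodd
    (jacobiSym_natAbs_ne_neg_one_of_mul_eq_sq_sub hnorm fun q hq h2q hqm hqn => ?_)
  have : Fact q.Prime := ⟨hq⟩
  have hqi : Prime (q : ℤ) := Nat.prime_iff_prime_int.mp hq
  have not_dvd : ∀ r : ℕ, r.Prime → J(2 | r) ≠ -1 → ¬ (q : ℤ) ∣ r := fun r hr h2r hdvd =>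
    h2r ((Nat.prime_dvd_prime_iff_eq hq hr).mp (Int.natCast_dvd_natCast.mp hdvd) ▸ h2q)
  have hq2 : ¬ (q : ℤ) ∣ 2 := not_dvd 2 Nat.prime_two (by norm_num)
  have hq7 : ¬ (q : ℤ) ∣ 7 := not_dvd 7 Nat.prime_seven (by norm_num)
  have hqx : (q : ℤ) ∣ x := by
    have hsum : (q : ℤ) ∣ 2 ^ 3 * x := by
      have hadd := dvd_add hqm ((hqi.dvd_or_dvd hqn).resolve_left hq7)
      rwa [show 4 * x + u + (4 * x - u) = 2 ^ 3 * x by ring] at hadd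
    exact (hqi.dvd_or_dvd hsum).resolve_left fun hdvd => hq2 (hqi.dvd_of_dvd_pow hdvd)
  have hqy : (q : ℤ) ∣ y := by
    have hqw := (jacobiSym.prime_dvd_of_eq_neg_one h2q (hnorm ▸ hqm.mul_right _)).2
    exact (hqi.dvd_or_dvd ((hqi.dvd_or_dvd hqw).resolve_left hq7)).resolve_left
      fun hdvd => hq2 (hqi.dvd_of_dvd_pow hdvd)
  exact hqi.not_isUnit (hxy.isUnit_of_dvd' hqx hqy)

section Criterion

variable {p : ℕ} {a c : ℤ}

theorem emod_eight_of_eq_sq_add_fourteen_mul_sq (hp : p.Prime) (ha : Odd a)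
    (hac : (p : ℤ) = a ^ 2 + 112 * c ^ 2) {x y : ℤ} (hxy : (p : ℤ) = x ^ 2 + 14 * y ^ 2) :
    (a - 4 * c) % 8 = 1 ∨ (a - 4 * c) % 8 = 7 := by
  have hpodd : Odd (p : ℤ) := (odd_iff_of_eq_sq_add_two_mul (k := 56 * c ^ 2) (by lia)).mpr ha
  have hx : Odd x := (odd_iff_of_eq_sq_add_two_mul (k := 7 * y ^ 2) (by lia)).mp hpodd
  have hcop : IsCoprime x y := isCoprime_of_prime_eq hp (k := 1) (l := 14) (by rw [hxy, one_mul])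
  have hfactor : (4 * x + (3 * a - 28 * c)) * (4 * x - (3 * a - 28 * c)) =
      7 * ((a + 12 * c) ^ 2 - 2 * (2 ^ 2 * y) ^ 2) := by
    linear_combination 16 * hac - 16 * hxy
  have hmod := emod_eight_of_mul_eq_seven_mul_sq_sub hcop (by grind) hfactor
  grind

theorem not_emod_eight_of_eq_two_mul_sq_add_seven_mul_sq (hp : p.Prime) (ha : Odd a)
    (hac : (p : ℤ) = a ^ 2 + 112 * c ^ 2) {x y : ℤ} (hxy : (p : ℤ) = 2 * x ^ 2 + 7 * y ^ 2) :
    ¬ ((a - 4 * c) % 8 = 1 ∨ (a - 4 * c) % 8 = 7) := by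
  have hpodd : Odd (p : ℤ) := (odd_iff_of_eq_sq_add_two_mul (k := 56 * c ^ 2) (by lia)).mpr ha
  have hy : Odd y :=
    (odd_iff_of_eq_sq_add_two_mul (k := x ^ 2 + 3 * y ^ 2) (by lia)).mp hpodd
  have hx : Odd x := by
    have ha4 := Int.sq_mod_four_eq_one_of_odd ha
    have hy4 := Int.sq_mod_four_eq_one_of_odd hy
    have hx2 : Odd (x ^ 2) := Int.odd_iff.mpr (by lia)
    exact (Int.odd_pow' two_ne_zero).mp hx2
  have hfactor : (4 * x + (a - 28 * c)) * (4 * x - (a - 28 * c)) =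
      7 * ((a + 4 * c) ^ 2 - 2 * (2 ^ 1 * y) ^ 2) := by
    linear_combination 8 * hac - 8 * hxy
  have hmod := emod_eight_of_mul_eq_seven_mul_sq_sub (isCoprime_of_prime_eq hp hxy)
    (by grind) hfactor
  grind

theorem exists_eq_sq_add_fourteen_mul_sq_iff (hp : p.Prime) (hp8 : p % 8 = 1) (h7 : J(p | 7) = 1)
    (ha : Odd a) (hac : (p : ℤ) = a ^ 2 + 112 * c ^ 2) :
    (∃ x y : ℤ, (p : ℤ) = x ^ 2 + 14 * y ^ 2) ↔ (a - 4 * c) % 8 = 1 ∨ (a - 4 * c) % 8 = 7 := by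
  have : Fact p.Prime := ⟨hp⟩
  refine ⟨fun ⟨x, y, hxy⟩ => emod_eight_of_eq_sq_add_fourteen_mul_sq hp ha hac hxy, fun h => ?_⟩
  have hsq := ZMod.isSquare_of_jacobiSym_eq_one (jacobiSym_neg_fourteen_eq_one hp8 h7)
  refine (exists_eq_sq_add_fourteen_mul_sq_or hsq h7).resolve_right fun ⟨x, y, hxy⟩ => ?_
  exact not_emod_eight_of_eq_two_mul_sq_add_seven_mul_sq hp ha hac hxy h

theorem exists_eq_sq_add_fourteen_mul_sq_iff_even (hp : p.Prime) (hp8 : p % 8 = 1)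
    (h7 : J(p | 7) = 1) (hac : (p : ℤ) = a ^ 2 + 112 * c ^ 2) :
    (∃ x y : ℤ, (p : ℤ) = x ^ 2 + 14 * y ^ 2) ↔ (p % 16 = 1 ↔ Even c) := by
  have hpodd : Odd (p : ℤ) := Int.odd_iff.mpr (by lia)
  have ha : Odd a := (odd_iff_of_eq_sq_add_two_mul (k := 56 * c ^ 2) (by lia)).mp hpodd
  have h16 := emod_eight_iff_emod_sixteen_eq_one (n := p) (k := 7 * c ^ 2) ha (by lia)
  rw [exists_eq_sq_add_fourteen_mul_sq_iff hp hp8 h7 ha hac]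
  grind

theorem exists_eq_sq_add_fourteen_mul_sq_iff_mod_sixteen (hp : p.Prime) (hp8 : p % 8 = 1)
    (h7 : J(p | 7) = 1) :
    (∃ x y : ℤ, (p : ℤ) = x ^ 2 + 14 * y ^ 2) ↔
      (p % 16 = 1 ↔ ∃ x y : ℤ, (p : ℤ) = x ^ 2 + 448 * y ^ 2) := by
  have : Fact p.Prime := ⟨hp⟩
  by_cases h448 : ∃ x y : ℤ, (p : ℤ) = x ^ 2 + 448 * y ^ 2
  · have ⟨x, y, hxy⟩ := h448
    rw [exists_eq_sq_add_fourteen_mul_sq_iff_even hp hp8 h7 (a := x) (c := 2 * y)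
      (by rw [hxy]; ring)]
    simp only [h448, even_two_mul]
  · obtain ⟨a, c, hac⟩ := exists_eq_sq_add_112_mul_sq hp8
      (ZMod.isSquare_of_jacobiSym_eq_one (jacobiSym_neg_seven_eq_one hp8 h7))
    have hc : ¬ Even c := fun hc => by
      obtain ⟨d, rfl⟩ := even_iff_two_dvd.mp hc
      exact h448 ⟨a, d, by rw [hac]; ring⟩
    rw [exists_eq_sq_add_fourteen_mul_sq_iff_even hp hp8 h7 hac]
    simp only [h448, hc]

end Criterion

theorem kaplansky_like_2 (p : ℕ) (hp : p.Prime) :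
    ((p % 112 = 1 ∨ p % 112 = 65 ∨ p % 112 = 81) → ((∃ x y : ℤ, (p : ℤ) = x ^ 2 + 14 * y ^ 2) ↔
      (∃ x y : ℤ, (p : ℤ) = x ^ 2 + 448 * y ^ 2))) ∧
    ((p % 112 = 9 ∨ p % 112 = 25 ∨ p % 112 = 57) → Xor' (∃ x y : ℤ, (p : ℤ) = x ^ 2 + 14 * y ^ 2)
      (∃ x y : ℤ, (p : ℤ) = x ^ 2 + 448 * y ^ 2)) := by
  constructor <;> intro h
  · have h16 : p % 16 = 1 := by lia
    have h7 : J(p | 7) = 1 := jacobiSym_seven_eq_one_of_mod (by lia)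
    simpa only [h16, true_iff] using
      exists_eq_sq_add_fourteen_mul_sq_iff_mod_sixteen hp (by lia) h7
  · have h16 : p % 16 ≠ 1 := by lia
    have h7 : J(p | 7) = 1 := jacobiSym_seven_eq_one_of_mod (by lia)
    refine (xor_iff_iff_not ..).mpr ?_
    simpa only [h16, false_iff] using
      exists_eq_sq_add_fourteen_mul_sq_iff_mod_sixteen hp (by lia) h7
end

section
/- Let p be a prime with p ≡ 1, 65, or 81 (mod 112). Then p is representable by x²+56y² if and only if p is representable by x²+448y². Let p be a prime with p ≡ 9, 25, or 57 (mod 112). Then p is representable by exactly one of the quadratic forms x²+56y² and x²+448y². -/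
/-!
Let `p ≡ 1 (mod 8)` be a prime that is a square modulo 7. Reduction of binary quadratic forms of
determinants 7 and 14 gives `p = a² + 112c²`, and also `p = x² + 56z²` or `p = 2x² + 7y²`. Comparing
two such expressions yields an identity `uv = k(s² - 2t²)` in which no prime inert in `ℤ[√2]`
divides both `u` and `v`. Such primes divide `s² - 2t²` to an even power, so they divide `u` to an
even power and the Jacobi symbol `(2/u)` is not `-1`; for odd `u` this means `u² ≡ 1 (mod 16)`. The
two cases thus become `p ≡ 1 + 8c²` and `p ≡ 9 + 8c²` modulo 16. Hence `c` is even, which is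
representability by `x² + 448y²`, exactly when representability by `x² + 56y²` agrees with
`p ≡ 1 (mod 16)`.
-/

open scoped NumberTheorySymbols

/-- `n` is a value of the principal form `x² + N y²`. -/
def IsSqAddMulSq (N n : ℤ) : Prop :=
  ∃ x y : ℤ, n = x ^ 2 + N * y ^ 2

/-- `n` is a value of the integral binary quadratic form `a x² + 2b x y + c y²`. As in Gauss, the
middle coefficient is even and `a c - b²` is called the determinant of the form. -/
def IsFormValue (a b c n : ℤ) : Prop :=
  ∃ x y : ℤ, n = a * x ^ 2 + 2 * b * x * y + c * y ^ 2

/-- The positive definite form `a x² + 2b x y + c y²` is reduced in the sense of Lagrange. -/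
structure IsReducedForm (a b c : ℤ) : Prop where
  pos : 0 < a
  abs_two_mul_le : |2 * b| ≤ a
  le : a ≤ c

section Reduction

variable {a b c n : ℤ}

lemma IsFormValue.swap (h : IsFormValue a b c n) : IsFormValue c b a n := by
  obtain ⟨x, y, rfl⟩ := h
  exact ⟨y, x, by ring⟩

lemma IsFormValue.shift (k : ℤ) (h : IsFormValue a b c n) :
    IsFormValue a (b - a * k) (c - 2 * b * k + a * k ^ 2) n := by
  obtain ⟨x, y, rfl⟩ := h
  exact ⟨x + k * y, y, by ring⟩

lemma exists_abs_two_mul_sub_mul_le (b : ℤ) (ha : 0 < a) : ∃ k : ℤ, |2 * (b - a * k)| ≤ a := by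
  lift a to ℕ using ha.le
  have ha' : 0 < a := by exact_mod_cast ha
  refine ⟨b.bdiv a, ?_⟩
  rw [← Int.bmod_eq_self_sub_mul_bdiv, abs_le]
  have lower := Int.le_bmod (x := b) ha'
  have upper := Int.bmod_lt (x := b) ha'
  omega

theorem exists_isReducedForm_of_isFormValue (ha : 0 < a) (hdet : 0 < a * c - b ^ 2)
    (hn : IsFormValue a b c n) :
    ∃ a' b' c' : ℤ, IsReducedForm a' b' c' ∧ a' * c' - b' ^ 2 = a * c - b ^ 2 ∧
      IsFormValue a' b' c' n := by
  induction hm : a.toNat using Nat.strong_induction_on generalizing a b c with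
  | _ m ih =>
    obtain ⟨k, hk⟩ := exists_abs_two_mul_sub_mul_le b ha
    have hshift := hn.shift k
    set b' := b - a * k with hb'
    set c' := c - 2 * b * k + a * k ^ 2 with hc'
    have hdet' : a * c' - b' ^ 2 = a * c - b ^ 2 := by rw [hb', hc']; ring
    by_cases hac : a ≤ c'
    · exact ⟨a, b', c', ⟨ha, hk, hac⟩, hdet', hshift⟩
    · have hc'_pos : 0 < c' := pos_of_mul_pos_right (by nlinarith [sq_nonneg b']) ha.le
      have hdet'' : c' * a - b' ^ 2 = a * c - b ^ 2 := by rw [← hdet', mul_comm]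
      rw [← hdet''] at hdet ⊢
      exact ih c'.toNat (by omega) hc'_pos hdet hshift.swap rfl

lemma IsReducedForm.three_mul_sq_le (h : IsReducedForm a b c) :
    3 * a ^ 2 ≤ 4 * (a * c - b ^ 2) := by
  have hb : (2 * b) ^ 2 ≤ a ^ 2 := sq_le_sq.2 (h.abs_two_mul_le.trans (le_abs_self a))
  nlinarith [mul_le_mul_of_nonneg_left h.le h.pos.le]

lemma IsReducedForm.eq_of_det_eq_seven (h : IsReducedForm a b c) (hdet : a * c - b ^ 2 = 7) :
    (a = 1 ∧ b = 0 ∧ c = 7) ∨ (a = 2 ∧ b ^ 2 = 1 ∧ c = 4) := by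
  have ha_pos := h.pos
  have ha_lt : a < 4 := by nlinarith [h.three_mul_sq_le]
  obtain ⟨h_lower, h_upper⟩ := abs_le.1 h.abs_two_mul_le
  have hb_lower : -1 ≤ b := by omega
  have hb_upper : b ≤ 1 := by omega
  interval_cases a <;> interval_cases b <;> omega

lemma IsReducedForm.eq_of_det_eq_fourteen (h : IsReducedForm a b c) (hdet : a * c - b ^ 2 = 14) :
    (a = 1 ∧ b = 0 ∧ c = 14) ∨ (a = 2 ∧ b = 0 ∧ c = 7) ∨ (a = 3 ∧ b ^ 2 = 1 ∧ c = 5) := by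
  have ha_pos := h.pos
  have ha_lt : a < 5 := by nlinarith [h.three_mul_sq_le]
  obtain ⟨h_lower, h_upper⟩ := abs_le.1 h.abs_two_mul_le
  have hb_lower : -2 ≤ b := by omega
  have hb_upper : b ≤ 2 := by omega
  interval_cases a <;> interval_cases b <;> omega

theorem exists_isReducedForm_of_isSquare_neg {N : ℤ} {m : ℕ} (hm : 0 < m) (hN : 0 < N)
    (hsq : IsSquare (-N : ZMod m)) :
    ∃ a b c : ℤ, IsReducedForm a b c ∧ a * c - b ^ 2 = N ∧ IsFormValue a b c m := by
  obtain ⟨r, hr⟩ := hsq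
  obtain ⟨b, rfl⟩ := ZMod.intCast_surjective r
  obtain ⟨c, hc⟩ : (m : ℤ) ∣ b ^ 2 + N := by
    rw [← ZMod.intCast_zmod_eq_zero_iff_dvd]
    push_cast
    linear_combination -hr
  have hdet : m * c - b ^ 2 = N := by linarith
  obtain ⟨a', b', c', hred, hdet', hval⟩ := exists_isReducedForm_of_isFormValue
    (by exact_mod_cast hm) (hdet ▸ hN) (show IsFormValue m b c m from ⟨1, 0, by ring⟩)
  exact ⟨a', b', c', hred, hdet'.trans hdet, hval⟩

end Reduction

section Jacobi

theorem jacobiSym_natAbs_ne_neg_one_of_mul_eq {d k u v s t : ℤ}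
    (h : u * v = k * (s ^ 2 - d * t ^ 2))
    (hk : ∀ q : ℕ, q.Prime → J(d | q) = -1 → ¬ (q : ℤ) ∣ k)
    (huv : ∀ q : ℕ, q.Prime → J(d | q) = -1 → (q : ℤ) ∣ u → ¬ (q : ℤ) ∣ v) :
    J(d | u.natAbs) ≠ -1 := by
  induction hm : u.natAbs using Nat.strong_induction_on generalizing u s t with
  | _ m ih =>
    subst hm
    intro hu
    obtain ⟨q, hq, hqu, hdq⟩ := jacobiSym.eq_neg_one_at_prime_divisor_of_eq_neg_one hu
    have := Fact.mk hq
    have hqZ := Nat.prime_iff_prime_int.1 hq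
    have hqv := huv q hq hdq (Int.natCast_dvd.2 hqu)
    obtain ⟨w, rfl⟩ := Int.natCast_dvd.2 hqu
    have hq_norm : (q : ℤ) ∣ s ^ 2 - d * t ^ 2 :=
      (hqZ.dvd_or_dvd (h ▸ mul_assoc (q : ℤ) w v ▸ dvd_mul_right _ _)).resolve_left (hk q hq hdq)
    obtain ⟨⟨s', rfl⟩, ⟨t', rfl⟩⟩ := jacobiSym.prime_dvd_of_eq_neg_one hdq hq_norm
    have hwv : w * v = q * (k * (s' ^ 2 - d * t' ^ 2)) :=
      mul_left_cancel₀ hqZ.ne_zero (by linear_combination h)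
    obtain ⟨w, rfl⟩ := (hqZ.dvd_or_dvd (Dvd.intro _ hwv.symm)).resolve_right hqv
    have hw : w ≠ 0 := by rintro rfl; simp at hu
    have hlt : w.natAbs < (q * (q * w)).natAbs := by
      have := Int.natAbs_pos.2 hw
      simp only [Int.natAbs_mul, Int.natAbs_natCast]
      nlinarith [hq.two_le, Nat.mul_le_mul hq.two_le hq.two_le]
    refine ih _ hlt (s := s') (t := t') (mul_left_cancel₀ hqZ.ne_zero (by linear_combination hwv))
      (fun r hr hdr hrw => huv r hr hdr ((hrw.mul_left _).mul_left _)) rfl ?_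
    simpa [Int.natAbs_mul, jacobiSym.mul_right', hq.ne_zero, hw, hdq] using hu

lemma sq_modEq_one_of_jacobiSym_two_ne_neg_one {v : ℤ} (hv : Odd v) (h : J(2 | v.natAbs) ≠ -1) :
    v ^ 2 ≡ 1 [ZMOD 16] := by
  rw [jacobiSym.at_two (Int.natAbs_odd.2 hv), ZMod.χ₈_nat_eq_if_mod_eight] at h
  have hv8 : v % 8 = 1 ∨ v % 8 = 7 := by
    split_ifs at h <;> grind
  obtain ⟨m, hm⟩ : ∃ m, v = 8 * m + 1 ∨ v = 8 * m - 1 := by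
    rcases hv8 with h1 | h7
    · exact ⟨v / 8, by omega⟩
    · exact ⟨v / 8 + 1, by omega⟩
  rcases hm with rfl | rfl
  · exact (Int.modEq_iff_dvd.2 ⟨4 * m ^ 2 + m, by ring⟩).symm
  · exact (Int.modEq_iff_dvd.2 ⟨4 * m ^ 2 - m, by ring⟩).symm

lemma eq_of_prime_of_dvd {q r : ℕ} (hq : q.Prime) (hr : r.Prime) (h : (q : ℤ) ∣ r) : q = r :=
  (Nat.prime_dvd_prime_iff_eq hq hr).1 (Int.natCast_dvd_natCast.1 h)

lemma not_dvd_two_of_jacobiSym_two_eq_neg_one {q : ℕ} (hq : q.Prime) (h : J(2 | q) = -1) :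
    ¬ (q : ℤ) ∣ 2 := by
  intro hdvd
  obtain rfl := eq_of_prime_of_dvd hq Nat.prime_two hdvd
  norm_num at h

lemma not_dvd_seven_of_jacobiSym_two_eq_neg_one {q : ℕ} (hq : q.Prime) (h : J(2 | q) = -1) :
    ¬ (q : ℤ) ∣ 7 := by
  intro hdvd
  obtain rfl := eq_of_prime_of_dvd hq (by norm_num : Nat.Prime 7) hdvd
  norm_num at h

end Jacobi

section Congruences

lemma not_dvd_of_squarefree_of_dvd {R : Type*} [CommSemiring R] {n q k l x y : R}
    (hn : Squarefree n) (hq : ¬ IsUnit q) (h : n = k * x ^ 2 + l * y ^ 2) (hx : q ∣ x) :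
    ¬ q ∣ y := by
  intro hy
  refine hq (hn q ?_)
  rw [h, ← sq]
  exact dvd_add ((pow_dvd_pow_of_dvd hx 2).mul_left k) ((pow_dvd_pow_of_dvd hy 2).mul_left l)

variable {n : ℤ}

lemma odd_of_odd_of_eq_sq_add {m x y : ℤ} (hn : Odd n) (hm : Even m) (h : n = x ^ 2 + m * y) :
    Odd x := by
  rw [h, Int.odd_add] at hn
  exact (Int.odd_pow' two_ne_zero).1 (hn.2 (hm.mul_right y))

theorem modEq_sixteen_of_eq_sq_add_of_sub_mul_eq {a w z c : ℤ} (hn : Squarefree n) (ha : Odd a)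
    (hna : n = a ^ 2 + 112 * c ^ 2) (hw : (a - 2 * w) * w = 7 * (z ^ 2 - 2 * c ^ 2)) :
    n ≡ 1 + 8 * c ^ 2 [ZMOD 16] := by
  have hcop : ∀ q : ℕ, q.Prime → J(2 | q) = -1 → (q : ℤ) ∣ a - 2 * w → ¬ (q : ℤ) ∣ w := by
    intro q hq h2q hqv hqw
    have := Fact.mk hq
    have hqZ := Nat.prime_iff_prime_int.1 hq
    have hqc : (q : ℤ) ∣ c := by
      refine (jacobiSym.prime_dvd_of_eq_neg_one h2q
        ((hqZ.dvd_or_dvd (hw ▸ hqv.mul_right w)).resolve_left ?_)).2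
      exact not_dvd_seven_of_jacobiSym_two_eq_neg_one hq h2q
    have hqa : (q : ℤ) ∣ a := (dvd_sub_left (hqw.mul_left 2)).1 hqv
    rw [← one_mul (a ^ 2)] at hna
    exact not_dvd_of_squarefree_of_dvd hn hqZ.not_isUnit hna hqa hqc
  have hv : (a - 2 * w) ^ 2 ≡ 1 [ZMOD 16] :=
    sq_modEq_one_of_jacobiSym_two_ne_neg_one (ha.sub_even (even_two_mul w))
      (jacobiSym_natAbs_ne_neg_one_of_mul_eq hw
        (fun _ => not_dvd_seven_of_jacobiSym_two_eq_neg_one) hcop)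
  have hparity : Even (w - z) := by
    have h_even : Even ((a - 2 * w) * w) ↔ Even (7 * (z ^ 2 - 2 * c ^ 2)) := by rw [hw]
    have ha_not_even : ¬ Even a := Int.not_even_iff_odd.2 ha
    have h7_not_even : ¬ Even (7 : ℤ) := by decide
    rw [Int.even_sub]
    simpa [Int.even_mul, Int.even_sub, Int.even_pow, ha_not_even, h7_not_even] using h_even
  obtain ⟨m, hm⟩ := hparity
  have hnv : n = (a - 2 * w) ^ 2 + 8 * c ^ 2 +
      16 * (2 * z ^ 2 + 3 * c ^ 2 + m * z + m ^ 2) := by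
    obtain rfl : w = z + 2 * m := by linarith
    linear_combination hna + 4 * hw
  rw [hnv]
  exact Int.modEq_add_fac_self.trans (hv.add_right _)

theorem modEq_sixteen_of_eq_sq_add_fifty_six {x z a c : ℤ} (hn : Squarefree n) (hn_odd : Odd n)
    (hnx : n = x ^ 2 + 56 * z ^ 2) (hna : n = a ^ 2 + 112 * c ^ 2) :
    n ≡ 1 + 8 * c ^ 2 [ZMOD 16] := by
  have hx : Odd x := odd_of_odd_of_eq_sq_add hn_odd (by decide) hnx
  have ha : Odd a := odd_of_odd_of_eq_sq_add hn_odd (by decide) hna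
  obtain ⟨x', hx', w, hw⟩ : ∃ x', x' ^ 2 = x ^ 2 ∧ (4 : ℤ) ∣ a - x' := by
    by_cases h : (4 : ℤ) ∣ a - x
    · exact ⟨x, rfl, h⟩
    · exact ⟨-x, neg_sq x, by grind⟩
  refine modEq_sixteen_of_eq_sq_add_of_sub_mul_eq hn ha hna (w := w) (z := z) ?_
  obtain rfl : x' = a - 4 * w := by linarith
  linarith

theorem modEq_sixteen_of_eq_two_mul_sq_add {x y a c : ℤ} (hn : Squarefree n) (hn8 : n % 8 = 1)
    (hnx : n = 2 * x ^ 2 + 7 * y ^ 2) (hna : n = a ^ 2 + 112 * c ^ 2) :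
    n ≡ 9 + 8 * c ^ 2 [ZMOD 16] := by
  have hy : Odd y := (Int.odd_pow' two_ne_zero).1 (Int.odd_iff.2 (by omega))
  have hx : Odd x := by
    obtain ⟨m, hm⟩ := Int.eight_dvd_sq_sub_one_of_odd hy
    exact (Int.odd_pow' two_ne_zero).1 (Int.odd_iff.2 (by omega))
  have hnorm : (y - 4 * c) * (7 * (y + 4 * c)) = 1 * (a ^ 2 - 2 * x ^ 2) := by linarith
  have hcop : ∀ q : ℕ, q.Prime → J(2 | q) = -1 → (q : ℤ) ∣ y - 4 * c →
      ¬ (q : ℤ) ∣ 7 * (y + 4 * c) := by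
    intro q hq h2q hq_sub hq_mul
    have := Fact.mk hq
    have hqZ := Nat.prime_iff_prime_int.1 hq
    have hq_add : (q : ℤ) ∣ y + 4 * c :=
      (hqZ.dvd_or_dvd hq_mul).resolve_left (not_dvd_seven_of_jacobiSym_two_eq_neg_one hq h2q)
    have hqy : (q : ℤ) ∣ y := by
      refine (hqZ.dvd_or_dvd ?_).resolve_left (not_dvd_two_of_jacobiSym_two_eq_neg_one hq h2q)
      have := dvd_add hq_sub hq_add
      rwa [sub_add_add_cancel, ← two_mul] at this
    have hqx : (q : ℤ) ∣ x := (jacobiSym.prime_dvd_of_eq_neg_one h2q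
      (one_mul (a ^ 2 - 2 * x ^ 2) ▸ hnorm ▸ hq_sub.mul_right _)).2
    exact not_dvd_of_squarefree_of_dvd hn hqZ.not_isUnit hnx hqx hqy
  have hu : (y - 4 * c) ^ 2 ≡ 1 [ZMOD 16] :=
    sq_modEq_one_of_jacobiSym_two_ne_neg_one (hy.sub_even (by grind))
      (jacobiSym_natAbs_ne_neg_one_of_mul_eq hnorm
        (fun q hq _ hq1 => (Nat.prime_iff_prime_int.1 hq).not_isUnit (isUnit_of_dvd_one hq1)) hcop)
  obtain ⟨k, hk⟩ := Int.eight_dvd_sq_sub_one_of_odd hx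
  obtain ⟨m, hm⟩ : Even (c * (7 * y - c)) := by
    rcases Int.even_or_odd c with hc | hc
    · exact hc.mul_right _
    · exact (((by decide : Odd (7 : ℤ)).mul hy).sub_odd hc).mul_left c
  have hnu : n = 7 * (y - 4 * c) ^ 2 + (2 + 8 * c ^ 2) + 16 * (k + m - 7 * c ^ 2) := by
    linear_combination hnx + 2 * hk + 8 * hm
  rw [hnu, show 9 + 8 * c ^ 2 = 7 * 1 + (2 + 8 * c ^ 2) by ring]
  exact Int.modEq_add_fac_self.trans ((hu.mul_left 7).add_right _)

end Congruences

section Representation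

variable {p : ℕ}

lemma isSquare_neg_of_mod_four_eq_one {q : ℕ} (hp : p.Prime) (hq : q.Prime) (hp4 : p % 4 = 1)
    (hq2 : q ≠ 2) (hpq : IsSquare (p : ZMod q)) : IsSquare (-q : ZMod p) := by
  have := Fact.mk hp
  have := Fact.mk hq
  have h_neg_one : IsSquare (-1 : ZMod p) := ZMod.exists_sq_eq_neg_one_iff.2 (by omega)
  rw [neg_eq_neg_one_mul]
  exact h_neg_one.mul ((ZMod.exists_sq_eq_prime_iff_of_mod_four_eq_one hp4 hq2).2 hpq)

lemma isSquare_neg_seven (hp : p.Prime) (hp4 : p % 4 = 1) (hp7 : IsSquare (p : ZMod 7)) :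
    IsSquare (-7 : ZMod p) := by
  exact_mod_cast isSquare_neg_of_mod_four_eq_one hp (by norm_num) hp4 (by norm_num) hp7

lemma isSquare_neg_fourteen (hp : p.Prime) (hp8 : p % 8 = 1) (hp7 : IsSquare (p : ZMod 7)) :
    IsSquare (-14 : ZMod p) := by
  have := Fact.mk hp
  have h_two : IsSquare (2 : ZMod p) := (ZMod.exists_sq_eq_two_iff (by omega)).2 (Or.inl hp8)
  rw [show (-14 : ZMod p) = -7 * 2 by ring]
  exact (isSquare_neg_seven hp (by omega) hp7).mul h_two

lemma four_dvd_of_sq_add_seven_mul_sq {n x y : ℤ} (hn : n ≡ 1 [ZMOD 8])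
    (h : n = x ^ 2 + 7 * y ^ 2) : 4 ∣ y := by
  have key : ∀ x y : ZMod 8, x ^ 2 + 7 * y ^ 2 = 1 → 2 * y = 0 := by decide
  have hxy : (x : ZMod 8) ^ 2 + 7 * (y : ZMod 8) ^ 2 = 1 := by
    exact_mod_cast (ZMod.intCast_eq_intCast_iff _ _ 8).2 (h ▸ hn)
  have h8 : (8 : ℤ) ∣ 2 * y := by
    rw [← Nat.cast_ofNat, ← ZMod.intCast_zmod_eq_zero_iff_dvd]
    exact_mod_cast key x y hxy
  omega

lemma two_dvd_of_sq_add_fourteen_mul_sq {n x y : ℤ} (hn : n ≡ 1 [ZMOD 8])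
    (h : n = x ^ 2 + 14 * y ^ 2) : 2 ∣ y := by
  have key : ∀ x y : ZMod 8, x ^ 2 + 14 * y ^ 2 = 1 → 4 * y = 0 := by decide
  have hxy : (x : ZMod 8) ^ 2 + 14 * (y : ZMod 8) ^ 2 = 1 := by
    exact_mod_cast (ZMod.intCast_eq_intCast_iff _ _ 8).2 (h ▸ hn)
  have h8 : (8 : ℤ) ∣ 4 * y := by
    rw [← Nat.cast_ofNat, ← ZMod.intCast_zmod_eq_zero_iff_dvd]
    exact_mod_cast key x y hxy
  omega

lemma not_isFormValue_three_five {b n : ℤ} (hb : b ^ 2 = 1) (hn : (n : ZMod 7) ≠ 0)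
    (hsq : IsSquare (n : ZMod 7)) : ¬ IsFormValue 3 b 5 n := by
  rintro ⟨x, y, rfl⟩
  obtain ⟨r, hr⟩ := hsq
  have three_nonsquare : ∀ r s : ZMod 7, 3 * (r * r) = s ^ 2 → r * r = 0 := by decide
  have hb' : (b : ZMod 7) ^ 2 = 1 := by exact_mod_cast congrArg (Int.cast : ℤ → ZMod 7) hb
  have h14 : (14 : ZMod 7) = 0 := rfl
  refine hn (hr.trans (three_nonsquare r (3 * x + b * y) ?_))
  rw [← hr]
  push_cast
  linear_combination (-y ^ 2 : ZMod 7) * hb' + (y ^ 2 : ZMod 7) * h14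

theorem isSqAddMulSq_one_hundred_twelve (hp : p.Prime) (hp8 : p % 8 = 1)
    (hp7 : IsSquare (p : ZMod 7)) : IsSqAddMulSq 112 p := by
  obtain ⟨a, b, c, hred, hdet, x, y, hxy⟩ := exists_isReducedForm_of_isSquare_neg (N := 7) hp.pos
    (by norm_num) (by exact_mod_cast isSquare_neg_seven hp (by omega) hp7)
  rcases hred.eq_of_det_eq_seven hdet with ⟨rfl, rfl, rfl⟩ | ⟨rfl, -, rfl⟩
  · obtain ⟨z, rfl⟩ := four_dvd_of_sq_add_seven_mul_sq (n := p) (x := x) (y := y)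
      (by exact_mod_cast hp8) (by linarith)
    exact ⟨x, z, by linarith⟩
  · have h_even : (p : ℤ) = 2 * (x ^ 2 + b * x * y + 2 * y ^ 2) := by linarith
    omega

theorem isSqAddMulSq_fifty_six_or (hp : p.Prime) (hp8 : p % 8 = 1) (hp7 : IsSquare (p : ZMod 7)) :
    IsSqAddMulSq 56 p ∨ ∃ x y : ℤ, (p : ℤ) = 2 * x ^ 2 + 7 * y ^ 2 := by
  obtain ⟨a, b, c, hred, hdet, hval⟩ := exists_isReducedForm_of_isSquare_neg (N := 14) hp.pos
    (by norm_num) (by exact_mod_cast isSquare_neg_fourteen hp hp8 hp7)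
  rcases hred.eq_of_det_eq_fourteen hdet with ⟨rfl, rfl, rfl⟩ | ⟨rfl, rfl, rfl⟩ | ⟨rfl, hb, rfl⟩
  · obtain ⟨x, y, hxy⟩ := hval
    obtain ⟨z, rfl⟩ := two_dvd_of_sq_add_fourteen_mul_sq (n := p) (x := x) (y := y)
      (by exact_mod_cast hp8) (by linarith)
    exact Or.inl ⟨x, z, by linarith⟩
  · obtain ⟨x, y, hxy⟩ := hval
    exact Or.inr ⟨x, y, by linarith⟩
  · have := Fact.mk hp
    have : Fact (Nat.Prime 7) := ⟨by norm_num⟩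
    have hp_ne : (p : ZMod 7) ≠ 0 := ZMod.prime_ne_zero 7 p (by omega)
    exact (not_isFormValue_three_five hb (by exact_mod_cast hp_ne) (by exact_mod_cast hp7)
      hval).elim

theorem even_iff_of_eq_sq_add_one_hundred_twelve {a c : ℤ} (hp : p.Prime) (hp8 : p % 8 = 1)
    (hp7 : IsSquare (p : ZMod 7)) (hpa : (p : ℤ) = a ^ 2 + 112 * c ^ 2) :
    Even c ↔ (IsSqAddMulSq 56 p ↔ p % 16 = 1) := by
  have hp_sqf : Squarefree (p : ℤ) := (Nat.prime_iff_prime_int.1 hp).squarefree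
  have hc : c ^ 2 % 2 = 0 ↔ Even c := by rw [← Int.even_iff, Int.even_pow' two_ne_zero]
  by_cases h56 : IsSqAddMulSq 56 p
  · obtain ⟨x, z, hxz⟩ := id h56
    have hmod : (p : ℤ) % 16 = (1 + 8 * c ^ 2) % 16 :=
      modEq_sixteen_of_eq_sq_add_fifty_six hp_sqf (Int.odd_iff.2 (by omega)) hxz hpa
    rw [iff_true_left h56, ← hc]
    omega
  · obtain ⟨x, y, hxy⟩ := (isSqAddMulSq_fifty_six_or hp hp8 hp7).resolve_left h56
    have hmod : (p : ℤ) % 16 = (9 + 8 * c ^ 2) % 16 :=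
      modEq_sixteen_of_eq_two_mul_sq_add hp_sqf (by omega) hxy hpa
    rw [iff_false_left h56, ← hc]
    omega

theorem isSqAddMulSq_four_hundred_forty_eight_iff (hp : p.Prime) (hp8 : p % 8 = 1)
    (hp7 : IsSquare (p : ZMod 7)) :
    IsSqAddMulSq 448 p ↔ (IsSqAddMulSq 56 p ↔ p % 16 = 1) := by
  constructor
  · rintro ⟨x, y, h⟩
    rw [← even_iff_of_eq_sq_add_one_hundred_twelve (a := x) (c := 2 * y) hp hp8 hp7 (by linarith)]
    exact even_two_mul y
  · obtain ⟨a, c, hac⟩ := isSqAddMulSq_one_hundred_twelve hp hp8 hp7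
    rw [← even_iff_of_eq_sq_add_one_hundred_twelve hp hp8 hp7 hac, even_iff_exists_two_mul]
    rintro ⟨d, rfl⟩
    exact ⟨a, d, by linarith⟩

end Representation

lemma isSquare_zmod_seven_of_mod_seven {n : ℕ} (h : n % 7 = 1 ∨ n % 7 = 2 ∨ n % 7 = 4) :
    IsSquare (n : ZMod 7) := by
  rw [← ZMod.natCast_mod]
  rcases h with h | h | h <;> rw [h] <;> decide

theorem kaplansky_like_5 (p : ℕ) (hp : p.Prime) :
    ((p % 112 = 1 ∨ p % 112 = 65 ∨ p % 112 = 81) → ((∃ x y : ℤ, (p : ℤ) = x ^ 2 + 56 * y ^ 2) ↔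
      (∃ x y : ℤ, (p : ℤ) = x ^ 2 + 448 * y ^ 2))) ∧
    ((p % 112 = 9 ∨ p % 112 = 25 ∨ p % 112 = 57) → Xor' (∃ x y : ℤ, (p : ℤ) = x ^ 2 + 56 * y ^ 2)
      (∃ x y : ℤ, (p : ℤ) = x ^ 2 + 448 * y ^ 2)) := by
  change (_ → (IsSqAddMulSq 56 p ↔ IsSqAddMulSq 448 p)) ∧
    (_ → Xor (IsSqAddMulSq 56 p) (IsSqAddMulSq 448 p))
  refine ⟨fun h => ?_, fun h => ?_⟩ <;>
    rw [isSqAddMulSq_four_hundred_forty_eight_iff hp (by omega)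
      (isSquare_zmod_seven_of_mod_seven (by omega))]
  · have h16 : p % 16 = 1 := by omega
    tauto
  · have h16 : p % 16 ≠ 1 := by omega
    rw [xor_iff_not_iff]
    tauto
end

section
/- Let p be a prime with p ≡ 1 or 9 (mod 20), and let M, N, A, B be integers with p = M² + N², N even, M ≡ 1 (mod 4), and p = A² + 5B². Then: (a) if p ≡ 1 (mod 20), then A is even if and only if 5 divides M; (b) if p ≡ 9 (mod 20), then A is even if and only if 5 divides N. -/
/-!
If `p = S² + T² = A² + 5B²` with `A + S` odd, then `(A + S)(A - S) = T² - 5B²`. Since `A` and `B`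
are coprime, `A + S`, `A - S`, `T`, `B` have no common factor, so `A + S` is a square times an odd
divisor `x` of some `u² - 5v²` with `u`, `v` coprime. Then `5` is a square modulo `x`, and by
quadratic reciprocity for the Jacobi symbol `x`, hence `A + S`, is a square modulo `5`. The same
holds for `A - S`, and the squares modulo `5` are `0` and `±1`. Now `S² + T² ≡ A² ≡ p (mod 5)`. If
`p ≡ 1`, then `S` is `0` or `±1`, and the latter would make one of `A ± S` equal to `±2`; so
`5 ∣ S`. If `p ≡ 4`, then `S` is `0` or `±2`, and the former would make `A ± S` equal to `±2`; so
`S² ≡ 4` and `5 ∣ T`. When `A` is even take `(S, T) = (M, N)`; when it is odd take `(N, M)`.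
-/

lemma isRelPrime_of_squarefree_sq_add_mul_sq {R : Type*} [CommSemiring R] {k a b : R}
    (h : Squarefree (a ^ 2 + k * b ^ 2)) : IsRelPrime a b := by
  rintro d ⟨a', rfl⟩ ⟨b', rfl⟩
  exact h d ⟨a' ^ 2 + k * b' ^ 2, by ring⟩

lemma exists_pow_mul_dvd_of_mul_eq_pow_mul {α : Type*} [CommMonoidWithZero α] [GCDMonoid α]
    {x y g m : α} {k : ℕ} (h : x * y = g ^ k * m) (hg : g ≠ 0) (hgcd : IsRelPrime (gcd x y) g) :
    ∃ d z, x = d ^ k * z ∧ z ∣ m := by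
  obtain ⟨a, b, ⟨z, rfl⟩, ⟨w, rfl⟩, hab⟩ :=
    exists_dvd_and_dvd_of_dvd_mul (h.symm ▸ dvd_mul_right (g ^ k) m : g ^ k ∣ x * y)
  have hm : m = z * w := by
    refine mul_left_cancel₀ (pow_ne_zero k hg) ?_
    rw [← h, hab, mul_mul_mul_comm]
  have hrel : IsUnit (gcd a b) := by
    have hdvd : gcd a b ∣ gcd (a * z) (b * w) :=
      gcd_dvd_gcd (dvd_mul_right a z) (dvd_mul_right b w)
    have hpow : gcd a b ∣ g ^ k := (gcd_dvd_left a b).trans ⟨b, hab⟩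
    exact (hgcd.of_dvd_left hdvd).pow_right.isUnit_of_dvd hpow
  obtain ⟨d, u, rfl⟩ := exists_associated_pow_of_mul_eq_pow hrel hab.symm
  exact ⟨d, u * z, mul_assoc _ _ _, hm ▸ (u.isUnit.mul_left_dvd.2 (dvd_mul_right z w))⟩

lemma isSquare_zmod_of_dvd_sq_sub_mul_sq {D u v : ℤ} {n : ℕ} (huv : IsCoprime u v)
    (h : (n : ℤ) ∣ u ^ 2 - D * v ^ 2) : IsSquare (D : ZMod n) := by
  have hcop : IsCoprime v n := by
    have : IsCoprime (u ^ 2 - D * v ^ 2) v := by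
      simpa [sub_eq_add_neg, pow_two, mul_assoc] using
        (huv.pow_left (m := 2)).add_mul_right_left (-(D * v))
    exact (this.of_isCoprime_of_dvd_left h).symm
  obtain ⟨w, hw⟩ := (ZMod.coe_int_isUnit_iff_isCoprime v n).2 hcop.symm
  have hsq : (u : ZMod n) ^ 2 = D * v ^ 2 := by
    rw [← sub_eq_zero]
    exact_mod_cast (ZMod.intCast_zmod_eq_zero_iff_dvd _ n).2 h
  refine ⟨u * ↑w⁻¹, ?_⟩
  rw [← sq, mul_pow, hsq, ← hw, mul_assoc, ← mul_pow, Units.mul_inv, one_pow, mul_one]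

section Reciprocity

variable {q : ℕ} [Fact q.Prime] (hq : q % 4 = 1)

include hq

lemma isSquare_zmod_of_isSquare_zmod_natAbs {x : ℤ} (hx : Odd x)
    (h : IsSquare (q : ZMod x.natAbs)) : IsSquare (x : ZMod q) := by
  have hneg : IsSquare (-1 : ZMod q) := ZMod.exists_sq_eq_neg_one_iff.2 (by omega)
  have habs : IsSquare (x.natAbs : ZMod q) := by
    by_contra hnot
    have hJ : jacobiSym q x.natAbs = -1 := by
      rw [jacobiSym.quadratic_reciprocity_one_mod_four hq hx.natAbs,
        ← jacobiSym.legendreSym.to_jacobiSym, legendreSym.eq_neg_one_iff']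
      exact hnot
    exact ZMod.nonsquare_of_jacobiSym_eq_neg_one hJ (by exact_mod_cast h)
  rcases Int.natAbs_eq x with hpos | hminus
  · rwa [hpos, Int.cast_natCast]
  · rw [hminus]
    simpa only [Int.cast_neg, Int.cast_natCast, neg_one_mul] using hneg.mul habs

lemma isSquare_zmod_of_mul_eq_sq_sub_mul_sq {x y u v : ℤ} (h : x * y = u ^ 2 - q * v ^ 2)
    (hx : Odd x) (hy : y ≠ 0) (hgcd : IsRelPrime (gcd x y) (gcd u v)) :
    IsSquare (x : ZMod q) := by
  obtain ⟨u', v', hu, hv, huv⟩ := extract_gcd u v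
  set g := gcd u v
  have hxy : x * y = g ^ 2 * (u' ^ 2 - q * v' ^ 2) := by
    rw [h, hu, hv]
    ring
  have hg : g ≠ 0 := by
    intro hg
    have hx0 : x ≠ 0 := by
      rintro rfl
      simp at hx
    exact mul_ne_zero hx0 hy (by simp [hxy, hg])
  obtain ⟨d, z, rfl, hz⟩ := exists_pow_mul_dvd_of_mul_eq_pow_mul hxy hg hgcd
  have hqz : IsSquare (q : ZMod z.natAbs) := by
    exact_mod_cast isSquare_zmod_of_dvd_sq_sub_mul_sq ((gcd_isUnit_iff u' v').1 huv)
      (Int.natAbs_dvd.2 hz)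
  push_cast
  exact (IsSquare.sq (d : ZMod q)).mul
    (isSquare_zmod_of_isSquare_zmod_natAbs hq (Int.odd_mul.1 hx).2 hqz)

lemma isSquare_zmod_add_of_sq_add_sq_eq_s6 {S T A B : ℤ}
    (h : S ^ 2 + T ^ 2 = A ^ 2 + q * B ^ 2) (hAB : IsCoprime A B) (hodd : Odd (A + S)) :
    IsSquare ((A + S : ℤ) : ZMod q) := by
  refine isSquare_zmod_of_mul_eq_sq_sub_mul_sq (y := A - S) (u := T) (v := B) hq
    (by linear_combination -h) hodd (fun h0 ↦ ?_) (fun d hd hd' ↦ ?_)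
  · obtain rfl := sub_eq_zero.1 h0
    exact Int.not_even_iff_odd.2 hodd ⟨A, rfl⟩
  · have hdS : d ∣ A + S := hd.trans (gcd_dvd_left _ _)
    have hd2A : d ∣ 2 * A := by
      simpa [two_mul] using dvd_add hdS (hd.trans (gcd_dvd_right _ _))
    have hd2 : IsCoprime d 2 := (Int.isCoprime_two_right.2 hodd).of_isCoprime_of_dvd_left hdS
    exact hAB.isUnit_of_dvd' (hd2.dvd_of_dvd_mul_left hd2A) (hd'.trans (gcd_dvd_right _ _))

end Reciprocity

lemma zmod_five_eq_zero_of_isSquare_add_of_isSquare_sub : ∀ {s t a : ZMod 5},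
    s ^ 2 + t ^ 2 = a ^ 2 → IsSquare (a + s) → IsSquare (a - s) →
      (a ^ 2 = 1 → s = 0) ∧ (a ^ 2 = 4 → t = 0) := by
  decide

lemma five_dvd_of_sq_add_sq_eq_sq_add_five_mul_sq {n S T A B : ℤ}
    (hST : n = S ^ 2 + T ^ 2) (hn : n = A ^ 2 + 5 * B ^ 2) (hAB : IsCoprime A B)
    (hodd : Odd (A + S)) : (n % 5 = 1 → 5 ∣ S) ∧ (n % 5 = 4 → 5 ∣ T) := by
  have : Fact (Nat.Prime 5) := ⟨Nat.prime_five⟩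
  have hadd : IsSquare (A + S : ZMod 5) := by
    exact_mod_cast isSquare_zmod_add_of_sq_add_sq_eq_s6 (q := 5) rfl (hST.symm.trans hn) hAB hodd
  have hsub : IsSquare (A - S : ZMod 5) := by
    have hodd' : Odd (A + -S) := by simpa [parity_simps] using hodd
    simpa [sub_eq_add_neg] using
      isSquare_zmod_add_of_sq_add_sq_eq_s6 (q := 5) (T := T) rfl (by simp [← hST, hn]) hAB hodd'
  have h5 : (5 : ZMod 5) = 0 := rfl
  have hA : (n : ZMod 5) = A ^ 2 := by simp [hn, h5]
  have hmod : ∀ {r : ℤ}, n % 5 = r → (A : ZMod 5) ^ 2 = r := by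
    rintro r rfl
    rw [← hA]
    exact (ZMod.intCast_mod n 5).symm
  have hsum : (S : ZMod 5) ^ 2 + T ^ 2 = A ^ 2 := by
    rw [← hA, hST]
    push_cast
    rfl
  obtain ⟨hS, hT⟩ := zmod_five_eq_zero_of_isSquare_add_of_isSquare_sub hsum hadd hsub
  exact ⟨fun h ↦ (ZMod.intCast_zmod_eq_zero_iff_dvd S 5).1 (hS (by simpa using hmod h)),
    fun h ↦ (ZMod.intCast_zmod_eq_zero_iff_dvd T 5).1 (hT (by simpa using hmod h))⟩

theorem muskat_thm1_general {n M N A B : ℤ} (hMN : n = M ^ 2 + N ^ 2) (hN : Even N)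
    (hM : Odd M) (hn : n = A ^ 2 + 5 * B ^ 2) (hAB : IsCoprime A B) :
    (n % 5 = 1 → (Even A ↔ 5 ∣ M)) ∧ (n % 5 = 4 → (Even A ↔ 5 ∣ N)) := by
  have hnot : 5 ∣ M → 5 ∣ N → n % 5 = 0 := fun h5M h5N ↦ Int.emod_eq_zero_of_dvd <|
    hMN ▸ dvd_add (dvd_pow h5M two_ne_zero) (dvd_pow h5N two_ne_zero)
  rcases Int.even_or_odd A with hA | hA
  · obtain ⟨h1, h4⟩ :=
      five_dvd_of_sq_add_sq_eq_sq_add_five_mul_sq hMN hn hAB (hA.add_odd hM)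
    exact ⟨fun h ↦ iff_of_true hA (h1 h), fun h ↦ iff_of_true hA (h4 h)⟩
  · obtain ⟨h1, h4⟩ :=
      five_dvd_of_sq_add_sq_eq_sq_add_five_mul_sq (hMN.trans (add_comm _ _)) hn hAB
        (hA.add_even hN)
    have hA' : ¬Even A := Int.not_even_iff_odd.2 hA
    exact ⟨fun h ↦ iff_of_false hA' fun h5M ↦ by have := hnot h5M (h1 h); omega,
      fun h ↦ iff_of_false hA' fun h5N ↦ by have := hnot (h4 h) h5N; omega⟩

theorem muskat_thm1 (p : ℕ) (hp : p.Prime) (hp20 : p % 20 = 1 ∨ p % 20 = 9)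
    (M N A B : ℤ) (hMN : (p : ℤ) = M ^ 2 + N ^ 2) (hN : Even N)
    (hM : M ≡ 1 [ZMOD 4]) (hAB : (p : ℤ) = A ^ 2 + 5 * B ^ 2) :
    (p % 20 = 1 → (Even A ↔ (5 : ℤ) ∣ M)) ∧
    (p % 20 = 9 → (Even A ↔ (5 : ℤ) ∣ N)) := by
  have hM' : Odd M := Int.odd_iff.2 (by have : M % 4 = 1 := hM; omega)
  have hcop : IsCoprime A B := (isRelPrime_of_squarefree_sq_add_mul_sq
    (hAB ▸ (Nat.prime_iff_prime_int.1 hp).squarefree)).isCoprime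
  obtain ⟨h1, h4⟩ := muskat_thm1_general hMN hN hM' hAB hcop
  exact ⟨fun h ↦ h1 (by omega), fun h ↦ h4 (by omega)⟩
end

section
/- Let p be a prime with p ≡ 1 or 7 (mod 8), and let M, N be integers with p = M² + 7N² and such that M ≡ 1 (mod 4) or N ≡ 1 (mod 4). Then: (a) there exist integers A, B with p = A² + 14B² if and only if 2p + M + N ≡ 3 (mod 8); (b) there exist integers C, D with p = 7C² + 2D² if and only if 2p + M + N ≡ 7 (mod 8). -/
/-!
If `m = A² + 14B² = M² + 7N²`, then `(A + M)(A - M) = 7(N² - 2B²)` is a norm from `ℤ[√2]`, because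
`7 = 3² - 2·1²`. A prime `q ≡ ±3 (mod 8)` is inert in `ℤ[√2]`, so it divides such a norm to an even
power; when `q` does not divide both `M` and `N` it cannot divide both factors, and hence it divides
`A + M` to an even power. So the odd part of `A + M` is `±1` modulo `8`, and comparing the two
representations of `m` modulo `16` turns this into `2m + M + N ≡ 3 (mod 8)`.

Multiplying by `7` turns `m = 7C² + 2D² = M² + 7N²` into `7m = (7C)² + 14D² = (7N)² + 7M²`, which
reduces the second form to the first. Since the reduced forms of determinant `14` are
`x² + 14y²`, `2x² + 7y²` and `3x² ± 2xy + 5y²`, and the last two take no values `±1` modulo `8`,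
one of the first two represents `p` whenever `p ≡ ±1 (mod 8)`, and the two congruences exclude each
other. When `p ≡ ±3 (mod 8)`, neither form represents `p` and `2p + M + N ≡ 1 (mod 4)`.
-/

open scoped NumberTheorySymbols

/-- No prime `q` with `J(a | q) = -1`, that is, no odd prime inert in `ℚ(√a)`, divides both `u` and
`v`. Unlike `IsRelPrime u v`, this survives multiplying `u` by a prime `q` with `J(a | q) ≠ -1`. -/
def CoprimeAtInert (a u v : ℤ) : Prop :=
  ∀ q : ℕ, q.Prime → J(a | q) = -1 → (q : ℤ) ∣ u → ¬ (q : ℤ) ∣ v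

theorem coprimeAtInert_of_isRelPrime {u v : ℤ} (h : IsRelPrime u v) (a : ℤ) :
    CoprimeAtInert a u v :=
  fun _ hq _ hqu hqv => (Nat.prime_iff_prime_int.mp hq).not_isUnit (h hqu hqv)

theorem jacobiSym_ne_neg_one_of_mul_eq_sq_sub_mul_sq {a : ℤ} {u : ℕ} {v x y : ℤ}
    (h : u * v = x ^ 2 - a * y ^ 2) (huv : CoprimeAtInert a u v) :
    J(a | u) ≠ -1 := by
  induction u using Nat.strong_induction_on generalizing x y with
  | _ u ih =>
    intro hJ
    obtain ⟨q, hq, hqu, hJq⟩ := jacobiSym.eq_neg_one_at_prime_divisor_of_eq_neg_one hJ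
    have : Fact q.Prime := ⟨hq⟩
    have hqv : ¬ (q : ℤ) ∣ v := huv q hq hJq (Int.natCast_dvd_natCast.mpr hqu)
    obtain ⟨⟨x, rfl⟩, ⟨y, rfl⟩⟩ := jacobiSym.prime_dvd_of_eq_neg_one hJq
      (h ▸ (Int.natCast_dvd_natCast.mpr hqu).mul_right v)
    have hq_sq_dvd : q ^ 2 ∣ u := by
      have hdvd : (q : ℤ) ^ 2 ∣ u * v := ⟨x ^ 2 - a * y ^ 2, by rw [h]; ring⟩
      have hcop : IsCoprime ((q : ℤ) ^ 2) v :=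
        ((Nat.prime_iff_prime_int.mp hq).coprime_iff_not_dvd.mpr hqv).pow_left
      exact_mod_cast hcop.dvd_of_dvd_mul_right hdvd
    obtain ⟨w, rfl⟩ := hq_sq_dvd
    have hw : w ≠ 0 := by
      rintro rfl
      simp at hJ
    have hJw : J(a | w) = -1 := by
      rwa [jacobiSym.mul_right' a (pow_ne_zero 2 hq.ne_zero) hw, jacobiSym.pow_right, hJq,
        neg_one_sq, one_mul] at hJ
    have hlt : w < q ^ 2 * w :=
      lt_mul_of_one_lt_left hw.bot_lt (Nat.one_lt_pow two_ne_zero hq.one_lt)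
    have hdescent : w * v = x ^ 2 - a * y ^ 2 := by
      apply mul_left_cancel₀ (pow_ne_zero 2 (Nat.cast_ne_zero.mpr hq.ne_zero : (q : ℤ) ≠ 0))
      push_cast at h
      linear_combination h
    refine ih w hlt hdescent (fun r hr hJr hrw => huv r hr hJr ?_) hJw
    rw [Nat.cast_mul]
    exact hrw.mul_left _

theorem not_dvd_fourteen_of_jacobiSym_two_eq_neg_one {q : ℕ} (hq : q.Prime)
    (hJ : J(2 | q) = -1) : ¬ (q : ℤ) ∣ 14 := by
  intro h
  have h : q ∣ 2 * 7 := mod_cast h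
  rcases hq.dvd_mul.mp h with h | h
  · rw [(Nat.prime_dvd_prime_iff_eq hq Nat.prime_two).mp h] at hJ
    norm_num at hJ
  · rw [(Nat.prime_dvd_prime_iff_eq hq (by norm_num)).mp h] at hJ
    norm_num at hJ

theorem emod_eight_of_mul_eq_sq_sub_two_mul_sq {u v x y : ℤ} (hu : Odd u)
    (h : u * v = x ^ 2 - 2 * y ^ 2) (huv : CoprimeAtInert 2 u v) :
    u % 8 = 1 ∨ u % 8 = 7 := by
  have hodd : Odd u.natAbs := Int.natAbs_odd.mpr hu
  have habs : (u.natAbs : ℤ) * (u.sign * v) = x ^ 2 - 2 * y ^ 2 := by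
    rw [← h, ← mul_assoc, mul_comm (u.natAbs : ℤ), Int.sign_mul_natAbs]
  have hJ := jacobiSym_ne_neg_one_of_mul_eq_sq_sub_mul_sq habs fun q hq hJq hqu hqv => by
    have hsign : IsUnit u.sign :=
      Int.isUnit_iff_natAbs_eq.mpr (Int.natAbs_sign_of_ne_zero (by rintro rfl; simp at hu))
    exact huv q hq hJq (Int.dvd_natAbs.mp hqu) (hsign.dvd_mul_left.mp hqv)
  rw [jacobiSym.at_two hodd, ZMod.χ₈_nat_eq_if_mod_eight] at hJ
  split_ifs at hJ <;> grind

section TwoRepresentations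

variable {m A B M N : ℤ}

theorem coprimeAtInert_of_sq_add_mul_sq_eq (hAB : m = A ^ 2 + 14 * B ^ 2)
    (hMN : m = M ^ 2 + 7 * N ^ 2) (hcop : CoprimeAtInert 2 M N) : CoprimeAtInert 2 A M := by
  intro q hq hJ hqA hqM
  have : Fact q.Prime := ⟨hq⟩
  have hq_not_dvd_seven : ¬ (q : ℤ) ∣ 7 := fun h =>
    not_dvd_fourteen_of_jacobiSym_two_eq_neg_one hq hJ (h.trans (by norm_num))
  have hdvd : (q : ℤ) ∣ 7 * (N ^ 2 - 2 * B ^ 2) := by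
    have hsub : 7 * (N ^ 2 - 2 * B ^ 2) = A ^ 2 - M ^ 2 := by linear_combination hAB - hMN
    exact hsub ▸ (hqA.pow two_ne_zero).sub (hqM.pow two_ne_zero)
  have hqN := (jacobiSym.prime_dvd_of_eq_neg_one hJ
    (((Nat.prime_iff_prime_int.mp hq).dvd_or_dvd hdvd).resolve_left hq_not_dvd_seven)).1
  exact hcop q hq hJ hqM hqN

theorem emod_eight_of_mul_eq_add (hAB : m = A ^ 2 + 14 * B ^ 2) (hMN : m = M ^ 2 + 7 * N ^ 2)
    (hcop : CoprimeAtInert 2 M N) {k u : ℤ} (hk : k ∣ 2) (hu : Odd u) (hku : k * u = A + M) :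
    u % 8 = 1 ∨ u % 8 = 7 := by
  have hnorm : u * (k * (A - M)) = (3 * N + 2 * B) ^ 2 - 2 * (N + 3 * B) ^ 2 := by
    linear_combination (A - M) * hku - hAB + hMN
  refine emod_eight_of_mul_eq_sq_sub_two_mul_sq hu hnorm fun q hq hJ hqu hqv => ?_
  have hqP : Prime (q : ℤ) := Nat.prime_iff_prime_int.mp hq
  have hq_not_dvd_two : ¬ (q : ℤ) ∣ 2 := fun h =>
    not_dvd_fourteen_of_jacobiSym_two_eq_neg_one hq hJ (h.trans (by norm_num))
  have hadd : (q : ℤ) ∣ A + M := hku ▸ hqu.mul_left k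
  have hsub : (q : ℤ) ∣ A - M :=
    (hqP.dvd_or_dvd hqv).resolve_left fun h => hq_not_dvd_two (h.trans hk)
  have hqA : (q : ℤ) ∣ A := by
    have hsum : (A + M) + (A - M) = 2 * A := by ring
    exact (hqP.dvd_or_dvd (hsum ▸ hadd.add hsub)).resolve_left hq_not_dvd_two
  exact coprimeAtInert_of_sq_add_mul_sq_eq hAB hMN hcop q hq hJ hqA ((dvd_add_right hqA).mp hadd)

theorem sq_emod_sixteen_cases (x : ℤ) :
    (x % 4 = 0 ∧ x ^ 2 % 16 = 0) ∨ (x % 4 = 2 ∧ x ^ 2 % 16 = 4) ∨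
      ((x % 8 = 1 ∨ x % 8 = 7) ∧ x ^ 2 % 16 = 1) ∨
      ((x % 8 = 3 ∨ x % 8 = 5) ∧ x ^ 2 % 16 = 9) := by
  have hsq : x ^ 2 % 16 = (x % 8) ^ 2 % 16 := by
    have hexpand : x ^ 2 = (x % 8) ^ 2 + 16 * (4 * (x / 8) ^ 2 + x / 8 * (x % 8)) := by
      linear_combination (-x - 8 * (x / 8) - x % 8) * Int.mul_ediv_add_emod x 8
    rw [hexpand, Int.add_mul_emod_self_left]
  generalize hr : x % 8 = r at hsq ⊢
  have hr_nonneg : 0 ≤ r := by omega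
  have hr_lt : r < 8 := by omega
  interval_cases r <;> omega

theorem emod_eight_cases_of_sq_add_seven_mul_sq (hm : Odd m) (hMN : m = M ^ 2 + 7 * N ^ 2)
    (hcong : M % 4 = 1 ∨ N % 4 = 1) :
    (m % 8 = 1 ∧ M % 4 = 1 ∧ N % 4 = 0) ∨ (m % 8 = 7 ∧ M % 4 = 0 ∧ N % 4 = 1) ∨
      ((m % 8 = 3 ∨ m % 8 = 5) ∧ (2 * m + M + N) % 4 = 1) := by
  have hM_sq := sq_emod_sixteen_cases M
  have hN_sq := sq_emod_sixteen_cases N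
  have hm_mod := Int.odd_iff.mp hm
  omega

theorem emod_eight_of_sq_add_fourteen_mul_sq (hm : Odd m) (hAB : m = A ^ 2 + 14 * B ^ 2) :
    m % 8 = 1 ∨ m % 8 = 7 := by
  have hA_sq := sq_emod_sixteen_cases A
  have hB_sq := sq_emod_sixteen_cases B
  have hm_mod := Int.odd_iff.mp hm
  omega

theorem two_mul_add_add_emod_eight_eq_three_of_emod_eight_eq_seven (hAB : m = A ^ 2 + 14 * B ^ 2)
    (hMN : m = M ^ 2 + 7 * N ^ 2) (hcop : CoprimeAtInert 2 M N)
    (hm : m % 8 = 7) (hN : N % 4 = 1) : (2 * m + M + N) % 8 = 3 := by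
  have hA_sq := sq_emod_sixteen_cases A
  have hB_sq := sq_emod_sixteen_cases B
  have hM_sq := sq_emod_sixteen_cases M
  have hN_sq := sq_emod_sixteen_cases N
  have hodd : Odd (A + M) := by
    rw [Int.odd_iff]
    omega
  have hu := emod_eight_of_mul_eq_add hAB hMN hcop (one_dvd 2) hodd (one_mul _)
  have hM_mod : M % 4 = 0 := by omega
  have hB_sq_mod : B ^ 2 % 8 = 1 := by omega
  have hmod : (A ^ 2 + 14 - 7 * N ^ 2) % 16 = 0 := by omega
  clear hAB hMN hB_sq hM_sq
  omega

theorem two_mul_add_add_emod_eight_eq_three_of_emod_eight_eq_one (hAB : m = A ^ 2 + 14 * B ^ 2)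
    (hMN : m = M ^ 2 + 7 * N ^ 2) (hcop : CoprimeAtInert 2 M N)
    (hm : m % 8 = 1) (hM : M % 4 = 1) : (2 * m + M + N) % 8 = 3 := by
  wlog hA : A % 4 = 1 generalizing A
  · refine this (A := -A) (by rw [hAB, neg_sq]) ?_
    have hA_sq := sq_emod_sixteen_cases A
    have hB_sq := sq_emod_sixteen_cases B
    omega
  obtain ⟨u, hAu⟩ : ∃ u, 2 * u = A + M := ⟨(A + M) / 2, by omega⟩
  obtain ⟨n, rfl⟩ : ∃ n, N = 4 * n := by
    have hM_sq := sq_emod_sixteen_cases M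
    have hN_sq := sq_emod_sixteen_cases N
    exact ⟨N / 4, by omega⟩
  obtain ⟨b, rfl⟩ : ∃ b, B = 2 * b := by
    have hA_sq := sq_emod_sixteen_cases A
    have hB_sq := sq_emod_sixteen_cases B
    exact ⟨B / 2, by omega⟩
  have hu : u % 8 = 1 ∨ u % 8 = 7 :=
    emod_eight_of_mul_eq_add hAB hMN hcop dvd_rfl (by rw [Int.odd_iff]; omega) hAu
  have huM : u * M = u ^ 2 + 14 * b ^ 2 - 28 * n ^ 2 := by
    obtain rfl : A = 2 * u - M := by linarith
    linarith
  have huM_mod : (u * M) % 8 = (u % 8 * M) % 8 := (Int.mod_modEq u 8).symm.mul_right M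
  have hu_sq := sq_emod_sixteen_cases u
  have hb_sq := sq_emod_sixteen_cases b
  have hn_sq := sq_emod_sixteen_cases n
  clear hAB hMN
  rcases hu with hu | hu <;> rw [hu] at huM_mod <;> omega

theorem two_mul_add_add_emod_eight_eq_three_of_sq_add_fourteen_mul_sq (hm : Odd m)
    (hAB : m = A ^ 2 + 14 * B ^ 2) (hMN : m = M ^ 2 + 7 * N ^ 2)
    (hcong : M % 4 = 1 ∨ N % 4 = 1) (hcop : CoprimeAtInert 2 M N) :
    (2 * m + M + N) % 8 = 3 := by
  rcases emod_eight_cases_of_sq_add_seven_mul_sq hm hMN hcong with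
    ⟨hm8, hM, -⟩ | ⟨hm8, -, hN⟩ | ⟨hm8, -⟩
  · exact two_mul_add_add_emod_eight_eq_three_of_emod_eight_eq_one hAB hMN hcop hm8 hM
  · exact two_mul_add_add_emod_eight_eq_three_of_emod_eight_eq_seven hAB hMN hcop hm8 hN
  · have := emod_eight_of_sq_add_fourteen_mul_sq hm hAB
    omega

theorem coprimeAtInert_seven_mul (hcop : CoprimeAtInert 2 M N) :
    CoprimeAtInert 2 (7 * N) M := by
  intro q hq hJ hq7N hqM
  have hqN := ((Nat.prime_iff_prime_int.mp hq).dvd_or_dvd hq7N).resolve_left fun h =>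
    not_dvd_fourteen_of_jacobiSym_two_eq_neg_one hq hJ (h.trans (by norm_num))
  exact hcop q hq hJ hqM hqN

theorem two_mul_add_add_emod_eight_eq_seven_of_seven_mul_sq_add_two_mul_sq {C D : ℤ} (hm : Odd m)
    (hCD : m = 7 * C ^ 2 + 2 * D ^ 2) (hMN : m = M ^ 2 + 7 * N ^ 2)
    (hcong : M % 4 = 1 ∨ N % 4 = 1) (hcop : CoprimeAtInert 2 M N) :
    (2 * m + M + N) % 8 = 7 := by
  have hm7 : Odd (7 * m) := Odd.mul (by decide) hm
  have hCD7 : 7 * m = (7 * C) ^ 2 + 14 * D ^ 2 := by linear_combination 7 * hCD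
  have hMN7 : 7 * m = (7 * N) ^ 2 + 7 * M ^ 2 := by linear_combination 7 * hMN
  have hcop7 := coprimeAtInert_seven_mul hcop
  have hcases := emod_eight_cases_of_sq_add_seven_mul_sq hm hMN hcong
  rcases hcong with hM | hN
  · have := two_mul_add_add_emod_eight_eq_three_of_sq_add_fourteen_mul_sq hm7 hCD7 hMN7
      (.inr hM) hcop7
    omega
  · have hcop7' : CoprimeAtInert 2 (-(7 * N)) M := fun q hq hJ hqN =>
      hcop7 q hq hJ (dvd_neg.mp hqN)
    have := two_mul_add_add_emod_eight_eq_three_of_sq_add_fourteen_mul_sq hm7 hCD7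
      (hMN7.trans (by ring)) (.inl (by omega)) hcop7'
    omega

end TwoRepresentations

/-- The integral binary quadratic form `a x² + 2 b x y + c y²` (Gauss's convention, with even middle
coefficient and determinant `a c - b²`) takes the value `m`. -/
def FormRepresents (a b c m : ℤ) : Prop :=
  ∃ x y : ℤ, m = a * x ^ 2 + 2 * b * x * y + c * y ^ 2

namespace FormRepresents

variable {a b c m : ℤ}

theorem swap (h : FormRepresents a b c m) : FormRepresents c b a m := by
  obtain ⟨x, y, rfl⟩ := h
  exact ⟨y, x, by ring⟩

theorem neg (h : FormRepresents a b c m) : FormRepresents a (-b) c m := by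
  obtain ⟨x, y, rfl⟩ := h
  exact ⟨x, -y, by ring⟩

theorem translate (h : FormRepresents a b c m) (t : ℤ) :
    FormRepresents a (b - a * t) (c - 2 * b * t + a * t ^ 2) m := by
  obtain ⟨x, y, rfl⟩ := h
  exact ⟨x + t * y, y, by ring⟩

theorem exists_two_mul_abs_le {a : ℕ} (ha : 0 < a) (h : FormRepresents a b c m) :
    ∃ b' c' : ℤ, FormRepresents a b' c' m ∧ a * c' - b' ^ 2 = a * c - b ^ 2 ∧ 2 * |b'| ≤ a := by
  refine ⟨_, _, h.translate (b.bdiv a), by ring, ?_⟩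
  rw [← Int.bmod_eq_self_sub_mul_bdiv]
  have hlower := Int.le_bmod (x := b) ha
  have hupper := Int.bmod_le (x := b) ha
  have habs : |b.bmod a| ≤ a / 2 := abs_le.mpr (by omega)
  omega

theorem exists_reduced (ha : 0 < a) (hdet : 0 < a * c - b ^ 2) (h : FormRepresents a b c m) :
    ∃ a' b' c' : ℤ, FormRepresents a' b' c' m ∧ a' * c' - b' ^ 2 = a * c - b ^ 2 ∧
      0 < a' ∧ 2 * |b'| ≤ a' ∧ a' ≤ c' := by
  lift a to ℕ using ha.le
  induction a using Nat.strong_induction_on generalizing b c with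
  | _ a ih =>
    obtain ⟨b', c', hrep, hdet', hb'⟩ := h.exists_two_mul_abs_le (mod_cast ha)
    by_cases hac : a ≤ c'
    · exact ⟨a, b', c', hrep, hdet', ha, hb', hac⟩
    have hc' : 0 < c' := by
      refine pos_of_mul_pos_right (a := (a : ℤ)) ?_ ha.le
      linarith [sq_nonneg b']
    lift c' to ℕ using hc'.le
    rw [← hdet', mul_comm] at hdet ⊢
    exact ih c' (by omega) hc' hdet hrep.swap

end FormRepresents

theorem eq_of_reduced_of_det_eq_fourteen {a b c : ℤ} (hdet : a * c - b ^ 2 = 14) (ha : 0 < a)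
    (hba : 2 * |b| ≤ a) (hac : a ≤ c) :
    (a = 1 ∧ b = 0 ∧ c = 14) ∨ (a = 2 ∧ b = 0 ∧ c = 7) ∨ (a = 3 ∧ (b = 1 ∨ b = -1) ∧ c = 5) := by
  have ha4 : a ≤ 4 := by
    have hb_sq : 4 * b ^ 2 ≤ a ^ 2 := by
      rw [← sq_abs b]
      nlinarith [abs_nonneg b]
    nlinarith
  have hb_le : 2 * b ≤ a := by linarith [le_abs_self b]
  have le_hb : -a ≤ 2 * b := by linarith [neg_abs_le b]
  have hb_upper : b ≤ 2 := by omega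
  have hb_lower : -2 ≤ b := by omega
  clear hba
  interval_cases a <;> interval_cases b <;> omega

theorem formRepresents_of_dvd_sq_add_fourteen {m b : ℤ} (hm : 0 < m) (h : m ∣ b ^ 2 + 14) :
    FormRepresents 1 0 14 m ∨ FormRepresents 2 0 7 m ∨ FormRepresents 3 1 5 m := by
  obtain ⟨c, hc⟩ := h
  have hself : FormRepresents m b c m := ⟨1, 0, by ring⟩
  obtain ⟨a', b', c', hrep, hdet, ha', hba', hac'⟩ :=
    hself.exists_reduced hm (by rw [← hc]; linarith)
  rw [← hc, add_sub_cancel_left] at hdet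
  rcases eq_of_reduced_of_det_eq_fourteen hdet ha' hba' hac' with
    ⟨rfl, rfl, rfl⟩ | ⟨rfl, rfl, rfl⟩ | ⟨rfl, rfl | rfl, rfl⟩
  · exact .inl hrep
  · exact .inr (.inl hrep)
  · exact .inr (.inr hrep)
  · exact .inr (.inr hrep.neg)

theorem isRelPrime_of_squarefree_sq_add_mul_sq_s7 {R : Type*} [CommRing R] {m d x y : R}
    (hm : Squarefree m) (h : m = x ^ 2 + d * y ^ 2) : IsRelPrime x y := by
  rintro z ⟨x, rfl⟩ ⟨y, rfl⟩
  exact hm z ⟨x ^ 2 + d * y ^ 2, by rw [h]; ring⟩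

theorem exists_dvd_sq_add_fourteen {p : ℕ} [Fact p.Prime] (h2 : IsSquare (2 : ZMod p)) {M N : ℤ}
    (hMN : (p : ℤ) = M ^ 2 + 7 * N ^ 2) (hcop : IsRelPrime M N) :
    ∃ b : ℤ, (p : ℤ) ∣ b ^ 2 + 14 := by
  have hp : Prime (p : ℤ) := Nat.prime_iff_prime_int.mp Fact.out
  have hpN : ¬ (p : ℤ) ∣ N := by
    intro hN
    have hM : (p : ℤ) ∣ M ^ 2 :=
      (dvd_add_left ((hN.pow two_ne_zero).mul_left 7)).mp (hMN ▸ dvd_rfl)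
    exact hp.not_isUnit (hcop (hp.dvd_of_dvd_pow hM) hN)
  rw [← ZMod.intCast_zmod_eq_zero_iff_dvd] at hpN
  have hzero : (M : ZMod p) ^ 2 + 7 * (N : ZMod p) ^ 2 = 0 := by
    rw [← ZMod.natCast_self p]
    exact_mod_cast congrArg (Int.cast : ℤ → ZMod p) hMN.symm
  obtain ⟨s, hs⟩ := h2
  obtain ⟨b, hb⟩ := ZMod.intCast_surjective (s * (M : ZMod p) / (N : ZMod p))
  refine ⟨b, (ZMod.intCast_zmod_eq_zero_iff_dvd _ p).mp ?_⟩
  push_cast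
  rw [hb]
  field_simp
  linear_combination 2 * hzero - (M : ZMod p) ^ 2 * hs

theorem FormRepresents.three_one_five_emod_eight {m : ℤ} (hm : Odd m)
    (h : FormRepresents 3 1 5 m) : m % 8 = 3 ∨ m % 8 = 5 := by
  obtain ⟨x, y, h⟩ := h
  have hcomplete : 3 * m = (3 * x + y) ^ 2 + 14 * y ^ 2 := by linear_combination 3 * h
  have h3m := emod_eight_of_sq_add_fourteen_mul_sq (Odd.mul (by decide) hm) hcomplete
  omega

theorem odd_of_prime_eq_sq_add_seven_mul_sq {p : ℕ} (hp : p.Prime) {M N : ℤ}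
    (hMN : (p : ℤ) = M ^ 2 + 7 * N ^ 2) : Odd (p : ℤ) := by
  rw [Int.odd_coe_nat]
  refine hp.odd_of_ne_two ?_
  rintro rfl
  have hM_sq := sq_emod_sixteen_cases M
  have hN_sq := sq_emod_sixteen_cases N
  omega

theorem exists_sq_add_fourteen_mul_sq_or_exists_seven_mul_sq_add_two_mul_sq {p : ℕ} (hp : p.Prime)
    (hp8 : p % 8 = 1 ∨ p % 8 = 7) {M N : ℤ} (hMN : (p : ℤ) = M ^ 2 + 7 * N ^ 2)
    (hcop : IsRelPrime M N) :
    (∃ A B : ℤ, (p : ℤ) = A ^ 2 + 14 * B ^ 2) ∨ ∃ C D : ℤ, (p : ℤ) = 7 * C ^ 2 + 2 * D ^ 2 := by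
  have : Fact p.Prime := ⟨hp⟩
  have h2 : IsSquare (2 : ZMod p) := (ZMod.exists_sq_eq_two_iff (by omega)).mpr hp8
  obtain ⟨b, hb⟩ := exists_dvd_sq_add_fourteen h2 hMN hcop
  rcases formRepresents_of_dvd_sq_add_fourteen (mod_cast hp.pos) hb with
    ⟨A, B, h⟩ | ⟨D, C, h⟩ | h
  · exact .inl ⟨A, B, by linear_combination h⟩
  · exact .inr ⟨C, D, by linear_combination h⟩
  · have := h.three_one_five_emod_eight (by rw [Int.odd_iff]; omega)
    omega

theorem muskat_thm3_general (p : ℕ) (hp : p.Prime) (M N : ℤ) (hMN : (p : ℤ) = M ^ 2 + 7 * N ^ 2)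
    (hcong : M ≡ 1 [ZMOD 4] ∨ N ≡ 1 [ZMOD 4]) :
    ((∃ A B : ℤ, (p : ℤ) = A ^ 2 + 14 * B ^ 2) ↔
      2 * (p : ℤ) + M + N ≡ 3 [ZMOD 8]) ∧
    ((∃ C D : ℤ, (p : ℤ) = 7 * C ^ 2 + 2 * D ^ 2) ↔
      2 * (p : ℤ) + M + N ≡ 7 [ZMOD 8]) := by
  change (_ ↔ _ % 8 = 3) ∧ (_ ↔ _ % 8 = 7)
  have hodd := odd_of_prime_eq_sq_add_seven_mul_sq hp hMN
  have hrel : IsRelPrime M N :=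
    isRelPrime_of_squarefree_sq_add_mul_sq_s7 (Nat.prime_iff_prime_int.mp hp).squarefree hMN
  have hcop := coprimeAtInert_of_isRelPrime hrel 2
  have hAB : (∃ A B : ℤ, (p : ℤ) = A ^ 2 + 14 * B ^ 2) → (2 * (p : ℤ) + M + N) % 8 = 3 :=
    fun ⟨_, _, h⟩ =>
      two_mul_add_add_emod_eight_eq_three_of_sq_add_fourteen_mul_sq hodd h hMN hcong hcop
  have hCD : (∃ C D : ℤ, (p : ℤ) = 7 * C ^ 2 + 2 * D ^ 2) → (2 * (p : ℤ) + M + N) % 8 = 7 :=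
    fun ⟨_, _, h⟩ =>
      two_mul_add_add_emod_eight_eq_seven_of_seven_mul_sq_add_two_mul_sq hodd h hMN hcong hcop
  have hrep (h : (2 * (p : ℤ) + M + N) % 4 = 3) :=
    have hcases := emod_eight_cases_of_sq_add_seven_mul_sq hodd hMN hcong
    exists_sq_add_fourteen_mul_sq_or_exists_seven_mul_sq_add_two_mul_sq hp (by omega) hMN hrel
  refine ⟨⟨hAB, fun h => (hrep (by omega)).resolve_right fun hCD' => ?_⟩,
    ⟨hCD, fun h => (hrep (by omega)).resolve_left fun hAB' => ?_⟩⟩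
  · have := hCD hCD'
    omega
  · have := hAB hAB'
    omega

theorem muskat_thm3 (p : ℕ) (hp : p.Prime) (hp8 : p % 8 = 1 ∨ p % 8 = 7)
    (M N : ℤ) (hMN : (p : ℤ) = M ^ 2 + 7 * N ^ 2)
    (hcong : M ≡ 1 [ZMOD 4] ∨ N ≡ 1 [ZMOD 4]) :
    ((∃ A B : ℤ, (p : ℤ) = A ^ 2 + 14 * B ^ 2) ↔
      2 * (p : ℤ) + M + N ≡ 3 [ZMOD 8]) ∧
    ((∃ C D : ℤ, (p : ℤ) = 7 * C ^ 2 + 2 * D ^ 2) ↔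
      2 * (p : ℤ) + M + N ≡ 7 [ZMOD 8]) :=
  muskat_thm3_general p hp M N hMN hcong
end
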